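/- arXiv:1910.04401 — 6 statements merged into one kernel-verified Lean document; each statement's English description precedes it below -/
import Mathlib

section
/- Rotations move agents to their next stable partners: if ρ = [(w_0,m_0),…,(w_{k-1},m_{k-1})] is a rotation exposed in some stable matching, then for each i (indices mod k), m_{i-1} is the ≻_{w_i}-least stable partner of w_i among those stable partners strictly preferred by w_i to m_i, and w_{i+1} is the ≻_{m_i}-greatest stable partner of m_i among those stable partners strictly less preferred by m_i than w_i. -/
/-- A matching market: men `M` and women `W`; each man has a strict preference
order over `W ∪ {∅}` and each woman over `M ∪ {∅}`, encoded by injective rank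
functions (a strictly higher rank means strictly more preferred); `none`
plays the role of `∅` (being unmatched), and partners ranked below `none`
are unacceptable. -/
structure Market (M W : Type*) where
  mRank : M → Option W → ℕ
  wRank : W → Option M → ℕ
  mRank_inj : ∀ m, Function.Injective (mRank m)
  wRank_inj : ∀ w, Function.Injective (wRank w)

/-- A matching: `mu` assigns each man a woman or `none`, `nu` assigns each
woman a man or `none`, and `μ(m) = w ↔ μ(w) = m`. -/
structure Matching (M W : Type*) where
  mu : M → Option W
  nu : W → Option M
  consistent : ∀ m w, mu m = some w ↔ nu w = some m

variable {M W : Type*}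

/-- Every matched agent prefers their partner to `∅`. -/
def Market.IndivRational (mkt : Market M W) (μ : Matching M W) : Prop :=
  (∀ m w, μ.mu m = some w → mkt.mRank m none < mkt.mRank m (some w)) ∧
  (∀ w m, μ.nu w = some m → mkt.wRank w none < mkt.wRank w (some m))

/-- `(m, w)` is a blocking pair for `μ`: they are not matched to each other,
`w ≻_m μ(m)` and `m ≻_w μ(w)`. -/
def Market.Blocking (mkt : Market M W) (μ : Matching M W) (m : M) (w : W) : Prop :=
  μ.mu m ≠ some w ∧
  mkt.mRank m (μ.mu m) < mkt.mRank m (some w) ∧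
  mkt.wRank w (μ.nu w) < mkt.wRank w (some m)

/-- A matching is stable if it is individually rational and has no blocking pair. -/
def Market.Stable (mkt : Market M W) (μ : Matching M W) : Prop :=
  mkt.IndivRational μ ∧ ∀ m w, ¬ mkt.Blocking μ m w

/-- Woman-dominance: `μ ≥ μ'` iff every woman weakly prefers her partner in `μ`. -/
def Market.Dom (mkt : Market M W) (μ μ' : Matching M W) : Prop :=
  ∀ w, mkt.wRank w (μ'.nu w) ≤ mkt.wRank w (μ.nu w)

/-- Strict woman-dominance: `μ > μ'`. -/
def Market.StrictDom (mkt : Market M W) (μ μ' : Matching M W) : Prop :=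
  mkt.Dom μ μ' ∧ μ ≠ μ'

/-- `μ'` covers `μ` in the woman-dominance order on stable matchings. -/
def Market.Covers (mkt : Market M W) (μ' μ : Matching M W) : Prop :=
  mkt.StrictDom μ' μ ∧
  ¬ ∃ μ'' : Matching M W, mkt.Stable μ'' ∧ mkt.StrictDom μ' μ'' ∧ mkt.StrictDom μ'' μ

/-- `μ'` is the elimination of the list `ρ = [(w_0,m_0),…,(w_{k-1},m_{k-1})]`
from `μ`: `k ≥ 2`, the women (resp. men) in `ρ` are distinct, `μ(w_i) = m_i`,
`μ'(m_i) = w_{(i+1) mod k}`, and every agent not appearing in `ρ` has the same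
partner in `μ` and `μ'`. -/
def Matching.IsElimOf (μ' μ : Matching M W) (ρ : List (W × M)) : Prop :=
  2 ≤ ρ.length ∧
  (ρ.map Prod.fst).Nodup ∧ (ρ.map Prod.snd).Nodup ∧
  (∀ i : Fin ρ.length, μ.nu (ρ.get i).1 = some (ρ.get i).2) ∧
  (∀ i : Fin ρ.length, μ'.mu (ρ.get i).2 =
    some (ρ.get ⟨(i.1 + 1) % ρ.length,
      Nat.mod_lt _ (Nat.lt_of_le_of_lt (Nat.zero_le _) i.isLt)⟩).1) ∧
  (∀ m : M, m ∉ ρ.map Prod.snd → μ'.mu m = μ.mu m) ∧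
  (∀ w : W, w ∉ ρ.map Prod.fst → μ'.nu w = μ.nu w)

/-- `ρ` is a rotation exposed in `μ`: the elimination of `ρ` from `μ` is a
stable matching which covers `μ`. -/
def Market.ExposedRotation (mkt : Market M W) (μ : Matching M W) (ρ : List (W × M)) : Prop :=
  ∃ μ' : Matching M W, Matching.IsElimOf μ' μ ρ ∧ mkt.Stable μ' ∧ mkt.Covers μ' μ

/-- `ρ` belongs to the set `Π` of all rotations, i.e. it is exposed in some
stable matching. -/
def Market.InPi (mkt : Market M W) (ρ : List (W × M)) : Prop :=
  ∃ μ : Matching M W, mkt.Stable μ ∧ mkt.ExposedRotation μ ρ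

/-- The cyclically next index in a rotation. -/
def RotNext (ρ : List (W × M)) (i : Fin ρ.length) : Fin ρ.length :=
  ⟨(i.1 + 1) % ρ.length, Nat.mod_lt _ (Nat.lt_of_le_of_lt (Nat.zero_le _) i.isLt)⟩

/-- The cyclically previous index in a rotation. -/
def RotPrev (ρ : List (W × M)) (i : Fin ρ.length) : Fin ρ.length :=
  ⟨(i.1 + ρ.length - 1) % ρ.length, Nat.mod_lt _ (Nat.lt_of_le_of_lt (Nat.zero_le _) i.isLt)⟩

/-- `ρ` moves man `m` from `w` to `w'` (i.e. `m = m_i`, `w = w_i`, `w' = w_{i+1}`). -/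
def MovesManFromTo (ρ : List (W × M)) (m : M) (w w' : W) : Prop :=
  ∃ i : Fin ρ.length, (ρ.get i).2 = m ∧ (ρ.get i).1 = w ∧ (ρ.get (RotNext ρ i)).1 = w'

/-- `ρ` moves woman `w` from `m` to `m'` (i.e. `w = w_i`, `m = m_i`, `m' = m_{i-1}`). -/
def MovesWomanFromTo (ρ : List (W × M)) (w : W) (m m' : M) : Prop :=
  ∃ i : Fin ρ.length, (ρ.get i).1 = w ∧ (ρ.get i).2 = m ∧ (ρ.get (RotPrev ρ i)).2 = m'

/-- `ρ1` is a type 1 predecessor of `ρ2`: `ρ1` moves some man `m` to a woman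
`w` and the pair `(w, m)` appears in `ρ2`. -/
def Market.Type1Pred (_mkt : Market M W) (ρ1 ρ2 : List (W × M)) : Prop :=
  ∃ (w : W) (m : M), (∃ w0 : W, MovesManFromTo ρ1 m w0 w) ∧ (w, m) ∈ ρ2

/-- `ρ1` is a type 2 predecessor of `ρ2`: `ρ1` moves some woman `w` from a man
strictly below `m` to a man strictly above `m`, and `ρ2` moves `m` from a woman
strictly above `w` to a woman strictly below `w`. -/
def Market.Type2Pred (mkt : Market M W) (ρ1 ρ2 : List (W × M)) : Prop :=
  ∃ (m : M) (w : W) (mlo mhi : M) (whi wlo : W),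
    MovesWomanFromTo ρ1 w mlo mhi ∧
    mkt.wRank w (some mlo) < mkt.wRank w (some m) ∧
    mkt.wRank w (some m) < mkt.wRank w (some mhi) ∧
    MovesManFromTo ρ2 m whi wlo ∧
    mkt.mRank m (some wlo) < mkt.mRank m (some w) ∧
    mkt.mRank m (some w) < mkt.mRank m (some whi)

/-- `ρ1` is a (type 1 or type 2) predecessor of `ρ2`; these are the edges of
the predecessor graph `G(Π)`. -/
def Market.Pred (mkt : Market M W) (ρ1 ρ2 : List (W × M)) : Prop :=
  mkt.Type1Pred ρ1 ρ2 ∨ mkt.Type2Pred ρ1 ρ2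

/-- `σ` assigns each woman the more preferred of her partners in `μ` and `μ'`. -/
def Market.IsJoin (mkt : Market M W) (μ μ' σ : Matching M W) : Prop :=
  ∀ w, σ.nu w = if mkt.wRank w (μ'.nu w) ≤ mkt.wRank w (μ.nu w) then μ.nu w else μ'.nu w

/-- `σ` assigns each woman the less preferred of her partners in `μ` and `μ'`. -/
def Market.IsMeet (mkt : Market M W) (μ μ' σ : Matching M W) : Prop :=
  ∀ w, σ.nu w = if mkt.wRank w (μ.nu w) ≤ mkt.wRank w (μ'.nu w) then μ.nu w else μ'.nu w


namespace RotHelp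

theorem ir_m {M W : Type*} {mkt : Market M W} {μ : Matching M W} (h : mkt.Stable μ) (m : M) :
    mkt.mRank m none ≤ mkt.mRank m (μ.mu m) := by
  cases e : μ.mu m with
  | none => exact le_rfl
  | some w => exact (h.1.1 m w e).le

theorem ir_w {M W : Type*} {mkt : Market M W} {μ : Matching M W} (h : mkt.Stable μ) (w : W) :
    mkt.wRank w none ≤ mkt.wRank w (μ.nu w) := by
  cases e : μ.nu w with
  | none => exact le_rfl
  | some m => exact (h.1.2 w m e).le

/-- a man preferring `μ'`: his `μ'` partner prefers `μ`. -/
theorem stepA {M W : Type*} {mkt : Market M W} {μ μ' : Matching M W} (h : mkt.Stable μ)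
    (m : M) (hm : mkt.mRank m (μ.mu m) < mkt.mRank m (μ'.mu m)) :
    ∃ w, μ'.mu m = some w ∧ mkt.wRank w (μ'.nu w) < mkt.wRank w (μ.nu w) := by
  cases e : μ'.mu m with
  | none => have := ir_m h m; rw [e] at hm; omega
  | some w =>
    refine ⟨w, rfl, ?_⟩
    have e2 := (μ'.consistent m w).1 e
    rw [e] at hm
    have hne : μ.mu m ≠ some w := by intro hh; rw [hh] at hm; exact lt_irrefl _ hm
    rw [e2]
    by_contra hc
    rcases (not_lt.1 hc).lt_or_eq with h1 | h1
    · exact h.2 m w ⟨hne, hm, h1⟩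
    · exact hne ((μ.consistent m w).2 (mkt.wRank_inj w h1))

theorem stepB {M W : Type*} {mkt : Market M W} {μ μ' : Matching M W} (h' : mkt.Stable μ')
    (w : W) (hw : mkt.wRank w (μ'.nu w) < mkt.wRank w (μ.nu w)) :
    ∃ m, μ.nu w = some m ∧ mkt.mRank m (μ.mu m) < mkt.mRank m (μ'.mu m) := by
  cases e : μ.nu w with
  | none => have := ir_w h' w; rw [e] at hw; omega
  | some m =>
    refine ⟨m, rfl, ?_⟩
    have e2 := (μ.consistent m w).2 e
    rw [e] at hw
    have hne : μ'.mu m ≠ some w := by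
      intro hh; rw [(μ'.consistent m w).1 hh] at hw; exact lt_irrefl _ hw
    rw [e2]
    by_contra hc
    rcases (not_lt.1 hc).lt_or_eq with h1 | h1
    · exact h'.2 m w ⟨hne, h1, hw⟩
    · exact hne (mkt.mRank_inj m h1)

theorem decomp {M W : Type*} [Finite M] [Finite W] {mkt : Market M W} {μ μ' : Matching M W}
    (h : mkt.Stable μ) (h' : mkt.Stable μ')
    (m : M) (hm : mkt.mRank m (μ.mu m) < mkt.mRank m (μ'.mu m)) :
    ∃ w, μ.mu m = some w ∧ mkt.wRank w (μ'.nu w) < mkt.wRank w (μ.nu w) := by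
  classical
  let A := {m : M // mkt.mRank m (μ.mu m) < mkt.mRank m (μ'.mu m)}
  let B := {w : W // mkt.wRank w (μ'.nu w) < mkt.wRank w (μ.nu w)}
  choose f hf1 hf2 using fun a : A => stepA h a.1 a.2
  choose g hg1 hg2 using fun b : B => stepB h' b.1 b.2
  let F : A → B := fun a => ⟨f a, hf2 a⟩
  let G : B → A := fun b => ⟨g b, hg2 b⟩
  have hF : Function.Injective F := by
    intro a b hab
    have hab' : f a = f b := congrArg Subtype.val hab
    have h1 := (μ'.consistent _ _).1 (hf1 a)
    have h2 := (μ'.consistent _ _).1 (hf1 b)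
    rw [hab', h2] at h1
    exact Subtype.ext (Option.some.inj h1).symm
  have hG : Function.Injective G := by
    intro a b hab
    have hab' : g a = g b := congrArg Subtype.val hab
    have h1 := (μ.consistent _ _).2 (hg1 a)
    have h2 := (μ.consistent _ _).2 (hg1 b)
    rw [hab', h2] at h1
    exact Subtype.ext (Option.some.inj h1).symm
  have hGF : Function.Surjective (G ∘ F) := Finite.surjective_of_injective (hG.comp hF)
  obtain ⟨a, ha⟩ := hGF ⟨m, hm⟩
  have hg : g (F a) = m := congrArg Subtype.val ha
  exact ⟨(F a).1, (μ.consistent _ _).2 (hg ▸ hg1 (F a)), (F a).2⟩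

theorem exists_join {M W : Type*} [Finite M] [Finite W] {mkt : Market M W} {μ μ' : Matching M W}
    (h : mkt.Stable μ) (h' : mkt.Stable μ') :
    ∃ σ : Matching M W, mkt.Stable σ ∧
      (∀ w, mkt.wRank w (σ.nu w) = max (mkt.wRank w (μ.nu w)) (mkt.wRank w (μ'.nu w))) ∧
      (∀ m, mkt.mRank m (σ.mu m) = min (mkt.mRank m (μ.mu m)) (mkt.mRank m (μ'.mu m))) := by
  classical
  have key : ∀ {μ μ' : Matching M W}, mkt.Stable μ → mkt.Stable μ' → ∀ m w, μ.mu m = some w →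
      (mkt.mRank m (μ.mu m) < mkt.mRank m (μ'.mu m) ↔
        mkt.wRank w (μ'.nu w) < mkt.wRank w (μ.nu w)) := by
    intro μ μ' h h' m w e
    constructor
    · intro hm
      obtain ⟨w', h1, h2⟩ := decomp h h' m hm
      rw [e] at h1
      cases h1
      exact h2
    · intro hw
      obtain ⟨m', h1, h2⟩ := stepB h' w hw
      rw [(μ.consistent m w).1 e] at h1
      cases h1
      exact h2
  let σm : M → Option W := fun m =>
    if mkt.mRank m (μ.mu m) < mkt.mRank m (μ'.mu m) then μ.mu m else μ'.mu m
  let σw : W → Option M := fun w =>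
    if mkt.wRank w (μ'.nu w) < mkt.wRank w (μ.nu w) then μ.nu w else μ'.nu w
  have hcons : ∀ m w, σm m = some w ↔ σw w = some m := by
    intro m w
    have k1 := key h h' m w
    have k2 := key h' h m w
    have c1 := μ.consistent m w
    have c2 := μ'.consistent m w
    have i1 : mkt.mRank m (μ.mu m) = mkt.mRank m (μ'.mu m) → μ.mu m = μ'.mu m :=
      fun e => mkt.mRank_inj m e
    have i2 : mkt.wRank w (μ.nu w) = mkt.wRank w (μ'.nu w) → μ.nu w = μ'.nu w :=
      fun e => mkt.wRank_inj w e
    simp only [σm, σw]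
    split_ifs with p q q
    · exact c1
    · constructor
      · intro e; exact absurd ((k1 e).1 p) q
      · intro e
        have e' := c2.2 e
        have := k2 e'
        have : mkt.wRank w (μ.nu w) = mkt.wRank w (μ'.nu w) := by omega
        exact c1.2 ((i2 this).trans e)
    · constructor
      · intro e
        have := k2 e
        have : mkt.mRank m (μ.mu m) = mkt.mRank m (μ'.mu m) := by omega
        exact c1.1 ((i1 this).trans e)
      · intro e; exact absurd ((k1 (c1.2 e)).2 q) p
    · exact c2
  have hw : ∀ w, mkt.wRank w (σw w) = max (mkt.wRank w (μ.nu w)) (mkt.wRank w (μ'.nu w)) := by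
    intro w
    simp only [σw]
    split_ifs <;> omega
  have hm : ∀ m, mkt.mRank m (σm m) = min (mkt.mRank m (μ.mu m)) (mkt.mRank m (μ'.mu m)) := by
    intro m
    simp only [σm]
    split_ifs <;> omega
  refine ⟨⟨σm, σw, hcons⟩, ⟨⟨?_, ?_⟩, ?_⟩, hw, hm⟩
  · intro m w e
    simp only [σm] at e
    split_ifs at e
    · exact h.1.1 m w e
    · exact h'.1.1 m w e
  · intro w m e
    simp only [σw] at e
    split_ifs at e
    · exact h.1.2 w m e
    · exact h'.1.2 w m e
  · rintro m w ⟨-, b2, b3⟩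
    have b2' : mkt.mRank m (σm m) < mkt.mRank m (some w) := b2
    have b3' : mkt.wRank w (σw w) < mkt.wRank w (some m) := b3
    rw [hw] at b3'
    rw [hm] at b2'
    rcases min_lt_iff.1 b2' with b | b
    · exact h.2 m w ⟨fun e => by rw [e] at b; exact lt_irrefl _ b, b,
        (le_max_left _ _).trans_lt b3'⟩
    · exact h'.2 m w ⟨fun e => by rw [e] at b; exact lt_irrefl _ b, b,
        (le_max_right _ _).trans_lt b3'⟩

def swapK {M W : Type*} (mkt : Market M W) : Market W M :=
  ⟨mkt.wRank, mkt.mRank, mkt.wRank_inj, mkt.mRank_inj⟩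

def swapM {M W : Type*} (μ : Matching M W) : Matching W M :=
  ⟨μ.nu, μ.mu, fun w m => (μ.consistent m w).symm⟩

theorem swap_stable {M W : Type*} {mkt : Market M W} {μ : Matching M W} (h : mkt.Stable μ) :
    (swapK mkt).Stable (swapM μ) :=
  ⟨⟨h.1.2, h.1.1⟩, fun w m hb =>
    h.2 m w ⟨fun e => hb.1 ((μ.consistent m w).1 e), hb.2.2, hb.2.1⟩⟩

theorem exists_meet {M W : Type*} [Finite M] [Finite W] {mkt : Market M W} {μ μ' : Matching M W}
    (h : mkt.Stable μ) (h' : mkt.Stable μ') :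
    ∃ σ : Matching M W, mkt.Stable σ ∧
      (∀ w, mkt.wRank w (σ.nu w) = min (mkt.wRank w (μ.nu w)) (mkt.wRank w (μ'.nu w))) ∧
      (∀ m, mkt.mRank m (σ.mu m) = max (mkt.mRank m (μ.mu m)) (mkt.mRank m (μ'.mu m))) := by
  obtain ⟨σ, h1, h2, h3⟩ := exists_join (swap_stable h) (swap_stable h')
  exact ⟨swapM σ, swap_stable h1, h3, h2⟩

theorem dom_rev {M W : Type*} [Finite M] [Finite W] {mkt : Market M W} {μ μ' : Matching M W}
    (h : mkt.Stable μ) (h' : mkt.Stable μ') (hd : mkt.Dom μ' μ) (m : M) :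
    mkt.mRank m (μ'.mu m) ≤ mkt.mRank m (μ.mu m) := by
  by_contra hc
  obtain ⟨w, -, h2⟩ := decomp h h' m (not_le.1 hc)
  have := hd w
  omega

theorem no_between {M W : Type*} [Finite M] [Finite W] {mkt : Market M W}
    {μ0 μ1 μ : Matching M W} (h0 : mkt.Stable μ0) (h1 : mkt.Stable μ1)
    (hc : mkt.Covers μ1 μ0) (h : mkt.Stable μ) :
    (∀ w, mkt.wRank w (μ0.nu w) < mkt.wRank w (μ.nu w) →
      mkt.wRank w (μ1.nu w) ≤ mkt.wRank w (μ.nu w)) ∧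
    (∀ m, mkt.mRank m (μ.mu m) < mkt.mRank m (μ0.mu m) →
      mkt.mRank m (μ.mu m) ≤ mkt.mRank m (μ1.mu m)) := by
  obtain ⟨τ, t1, t2, t3⟩ := exists_join h h0
  obtain ⟨σ, s1, s2, s3⟩ := exists_meet t1 h1
  have d1 : mkt.Dom μ1 σ := fun w => by rw [s2]; exact min_le_right _ _
  have d0 : mkt.Dom σ μ0 := fun w => by
    rw [s2, t2]; exact le_min (le_max_right _ _) (hc.1.1 w)
  have hh : μ1 = σ ∨ σ = μ0 := by
    by_contra hn
    push Not at hn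
    exact hc.2 ⟨σ, s1, ⟨d1, hn.1⟩, ⟨d0, hn.2⟩⟩
  constructor
  · intro w hw
    have a := s2 w
    rw [t2] at a
    rcases hh with e | e
    · rw [← e] at a; omega
    · rw [e] at a; omega
  · intro m hm
    have a := s3 m
    rw [t3] at a
    rcases hh with e | e
    · rw [← e] at a; omega
    · rw [e] at a; omega

theorem next_prev {M W : Type*} (ρ : List (W × M)) (i : Fin ρ.length) :
    RotNext ρ (RotPrev ρ i) = i := by
  apply Fin.ext
  have := i.2
  simp only [RotNext, RotPrev, Nat.mod_add_mod]
  rw [show i.1 + ρ.length - 1 + 1 = i.1 + ρ.length by omega, Nat.add_mod_right,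
    Nat.mod_eq_of_lt this]

theorem next_ne {M W : Type*} (ρ : List (W × M)) (h : 2 ≤ ρ.length) (i : Fin ρ.length) :
    RotNext ρ i ≠ i := by
  intro e
  have e' := congrArg Fin.val e
  simp only [RotNext] at e'
  have := i.2
  rcases Nat.lt_or_ge (i.1 + 1) ρ.length with h1 | h1
  · rw [Nat.mod_eq_of_lt h1] at e'; omega
  · rw [show i.1 + 1 = ρ.length by omega, Nat.mod_self] at e'; omega

theorem fst_inj {M W : Type*} (ρ : List (W × M)) (h : (ρ.map Prod.fst).Nodup)
    (i j : Fin ρ.length) (e : (ρ.get i).1 = (ρ.get j).1) : i = j := by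
  have := (List.Nodup.getElem_inj_iff h (i := i.1) (j := j.1)
    (hi := by simp) (hj := by simp)).1 (by simpa using e)
  exact Fin.ext this

end RotHelp

/-- rotations move agents to their next stable partners: if
`ρ` is a rotation exposed in a stable matching `μ0` then, for each `i`,
`m_{i-1}` is the least preferred stable partner of `w_i` among those she
strictly prefers to `m_i`, and `w_{i+1}` is the most preferred stable partner
of `m_i` among those he strictly prefers less than `w_i`. -/
theorem rotation_moves_to_next_stable_partner {M W : Type*} [Fintype M] [Fintype W]
    (mkt : Market M W) (μ0 : Matching M W) (h0 : mkt.Stable μ0)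
    (ρ : List (W × M)) (hρ : mkt.ExposedRotation μ0 ρ) (i : Fin ρ.length) :
    ((∃ μ : Matching M W, mkt.Stable μ ∧
        μ.nu (ρ.get i).1 = some (ρ.get (RotPrev ρ i)).2) ∧
      mkt.wRank (ρ.get i).1 (some (ρ.get i).2) <
        mkt.wRank (ρ.get i).1 (some (ρ.get (RotPrev ρ i)).2) ∧
      (∀ m' : M, (∃ μ : Matching M W, mkt.Stable μ ∧ μ.nu (ρ.get i).1 = some m') →
        mkt.wRank (ρ.get i).1 (some (ρ.get i).2) < mkt.wRank (ρ.get i).1 (some m') →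
        mkt.wRank (ρ.get i).1 (some (ρ.get (RotPrev ρ i)).2) ≤
          mkt.wRank (ρ.get i).1 (some m'))) ∧
    ((∃ μ : Matching M W, mkt.Stable μ ∧
        μ.mu (ρ.get i).2 = some (ρ.get (RotNext ρ i)).1) ∧
      mkt.mRank (ρ.get i).2 (some (ρ.get (RotNext ρ i)).1) <
        mkt.mRank (ρ.get i).2 (some (ρ.get i).1) ∧
      (∀ w' : W, (∃ μ : Matching M W, mkt.Stable μ ∧ μ.mu (ρ.get i).2 = some w') →
        mkt.mRank (ρ.get i).2 (some w') < mkt.mRank (ρ.get i).2 (some (ρ.get i).1) →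
        mkt.mRank (ρ.get i).2 (some w') ≤
          mkt.mRank (ρ.get i).2 (some (ρ.get (RotNext ρ i)).1))) := by
  classical
  obtain ⟨μ1, ⟨hk, hn1, hn2, he, hx, -, -⟩, h1, hc⟩ := hρ
  have hx' : ∀ j, μ1.mu (ρ.get j).2 = some (ρ.get (RotNext ρ j)).1 := hx
  have a1 : μ1.mu (ρ.get i).2 = some (ρ.get (RotNext ρ i)).1 := hx' i
  have a0 : μ0.mu (ρ.get i).2 = some (ρ.get i).1 := (μ0.consistent _ _).2 (he i)
  have b1 : μ1.nu (ρ.get i).1 = some (ρ.get (RotPrev ρ i)).2 := by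
    have := hx' (RotPrev ρ i)
    rw [RotHelp.next_prev] at this
    exact (μ1.consistent _ _).1 this
  have b0 := he i
  have hne : (ρ.get (RotNext ρ i)).1 ≠ (ρ.get i).1 := fun e =>
    RotHelp.next_ne ρ hk i (RotHelp.fst_inj ρ hn1 _ _ e)
  have hneW : μ0.nu (ρ.get i).1 ≠ μ1.nu (ρ.get i).1 := by
    intro e
    rw [b0] at e
    have := (μ1.consistent _ _).2 e.symm
    rw [a1] at this
    exact hne (Option.some.inj this)
  refine ⟨⟨⟨μ1, h1, b1⟩, ?_, ?_⟩, ⟨⟨μ1, h1, a1⟩, ?_, ?_⟩⟩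
  · rw [← b0, ← b1]
    exact lt_of_le_of_ne (hc.1.1 _) fun e => hneW (mkt.wRank_inj _ e)
  · rintro m' ⟨μ, hμ, hm⟩ hlt
    rw [← b0, ← hm] at hlt
    rw [← b1, ← hm]
    exact (RotHelp.no_between h0 h1 hc hμ).1 _ hlt
  · have := RotHelp.dom_rev h0 h1 hc.1.1 (ρ.get i).2
    rw [a0, a1] at this
    exact lt_of_le_of_ne this fun e => hne (Option.some.inj (mkt.mRank_inj _ e))
  · rintro w' ⟨μ, hμ, hm⟩ hlt
    rw [← a0, ← hm] at hlt
    rw [← a1, ← hm]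
    exact (RotHelp.no_between h0 h1 hc hμ).2 _ hlt
end

section
/- A pair (w,m) of a woman and a man appears in at most one rotation in Π; that is, if ρ1 and ρ2 are rotations exposed in some stable matchings and the pair (w,m) appears in both, then ρ1 and ρ2 are equal up to cyclic shift. -/
variable {M W : Type*}

section Helpers

theorem lemA (mkt : Market M W) {μ μ' : Matching M W} (h' : mkt.Stable μ') {m : M} {w : W}
    (hw : mkt.wRank w (μ'.nu w) < mkt.wRank w (some m)) :
    mkt.mRank m (some w) < mkt.mRank m (μ'.mu m) := by
  have hne : μ'.mu m ≠ some w := by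
    intro h
    rw [(μ'.consistent m w).1 h] at hw
    exact lt_irrefl _ hw
  by_contra hc
  refine h'.2 m w ⟨hne, lt_of_le_of_ne (not_lt.1 hc) ?_, hw⟩
  intro h
  exact hne (mkt.mRank_inj m h)

theorem lemB (mkt : Market M W) {μ' : Matching M W} (h' : mkt.Stable μ') {m : M} {w : W}
    (hw : mkt.mRank m (μ'.mu m) < mkt.mRank m (some w)) :
    mkt.wRank w (some m) < mkt.wRank w (μ'.nu w) := by
  have hne : μ'.mu m ≠ some w := by
    intro h
    rw [h] at hw
    exact lt_irrefl _ hw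
  by_contra hc
  refine h'.2 m w ⟨hne, hw, lt_of_le_of_ne (not_lt.1 hc) ?_⟩
  intro h
  exact hne ((μ'.consistent m w).2 (mkt.wRank_inj w h))

theorem m_none_le (mkt : Market M W) {μ : Matching M W} (h : mkt.Stable μ) (m : M) :
    mkt.mRank m none ≤ mkt.mRank m (μ.mu m) := by
  cases hm : μ.mu m with
  | none => exact le_rfl
  | some w => exact (h.1.1 m w hm).le

theorem w_none_le (mkt : Market M W) {μ : Matching M W} (h : mkt.Stable μ) (w : W) :
    mkt.wRank w none ≤ mkt.wRank w (μ.nu w) := by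
  cases hm : μ.nu w with
  | none => exact le_rfl
  | some m => exact (h.1.2 w m hm).le

theorem opp1 [Fintype M] [Fintype W] (mkt : Market M W) {μ μ' : Matching M W}
    (h : mkt.Stable μ) (h' : mkt.Stable μ') {m : M} {w : W} (hm : μ.mu m = some w) :
    mkt.mRank m (some w) < mkt.mRank m (μ'.mu m) ↔
      mkt.wRank w (μ'.nu w) < mkt.wRank w (some m) := by
  refine ⟨fun hlt => ?_, fun hw => lemA (μ := μ) mkt h' hw⟩
  let A := {m : M // mkt.mRank m (μ.mu m) < mkt.mRank m (μ'.mu m)}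
  let B := {w : W // mkt.wRank w (μ'.nu w) < mkt.wRank w (μ.nu w)}
  have hf : ∀ a : A, ∃ b : B, μ'.mu a.1 = some b.1 := by
    rintro ⟨a, ha⟩
    cases hb : μ'.mu a with
    | none =>
      rw [hb] at ha
      exact absurd ha (not_lt.2 (m_none_le mkt h a))
    | some b =>
      rw [hb] at ha
      refine ⟨⟨b, ?_⟩, rfl⟩
      rw [(μ'.consistent a b).1 hb]
      exact lemB mkt h ha
  have hg : ∀ b : B, ∃ a : A, μ.nu b.1 = some a.1 := by
    rintro ⟨b, hb⟩
    cases ha : μ.nu b with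
    | none =>
      rw [ha] at hb
      exact absurd hb (not_lt.2 (w_none_le mkt h' b))
    | some a =>
      rw [ha] at hb
      refine ⟨⟨a, ?_⟩, rfl⟩
      rw [(μ.consistent a b).2 ha]
      exact lemA (μ := μ) mkt h' hb
  choose f hf using hf
  choose g hg using hg
  have fi : Function.Injective f := by
    intro a a' e
    have h1 := (μ'.consistent _ _).1 (hf a)
    have h2 := (μ'.consistent _ _).1 (hf a')
    rw [e, h2] at h1
    exact Subtype.ext (Option.some.inj h1).symm
  have gi : Function.Injective g := by
    intro a a' e
    have h1 := (μ.consistent _ _).2 (hg a)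
    have h2 := (μ.consistent _ _).2 (hg a')
    rw [e, h2] at h1
    exact Subtype.ext (Option.some.inj h1).symm
  have : Finite A := Subtype.finite
  have hs : Function.Surjective (g ∘ f) := Finite.surjective_of_injective (gi.comp fi)
  obtain ⟨a, ha⟩ := hs ⟨m, by rw [hm]; exact hlt⟩
  have h1 := hg (f a)
  have h2 : (g (f a)).1 = m := congrArg Subtype.val ha
  rw [h2] at h1
  have h3 := (μ.consistent _ _).2 h1
  rw [hm] at h3
  have h4 := (f a).2
  rw [h1, ← Option.some.inj h3] at h4
  exact h4

theorem opp2 [Fintype M] [Fintype W] (mkt : Market M W) {μ μ' : Matching M W}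
    (h : mkt.Stable μ) (h' : mkt.Stable μ') {m : M} {w : W} (hm : μ.mu m = some w) :
    mkt.mRank m (μ'.mu m) < mkt.mRank m (some w) ↔
      mkt.wRank w (some m) < mkt.wRank w (μ'.nu w) := by
  have h1 := opp1 mkt h h' hm
  have h2 : mkt.mRank m (μ'.mu m) = mkt.mRank m (some w) ↔
      mkt.wRank w (some m) = mkt.wRank w (μ'.nu w) := by
    rw [(mkt.mRank_inj m).eq_iff, (mkt.wRank_inj w).eq_iff, μ'.consistent, eq_comm]
  omega

theorem exists_join [Fintype M] [Fintype W] (mkt : Market M W) {μ μ' : Matching M W}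
    (h : mkt.Stable μ) (h' : mkt.Stable μ') :
    ∃ σ : Matching M W, mkt.Stable σ ∧ mkt.IsJoin μ μ' σ := by
  refine ⟨⟨fun m => if mkt.mRank m (μ.mu m) ≤ mkt.mRank m (μ'.mu m) then μ.mu m else μ'.mu m,
    fun w => if mkt.wRank w (μ'.nu w) ≤ mkt.wRank w (μ.nu w) then μ.nu w else μ'.nu w, ?_⟩,
    ⟨⟨?_, ?_⟩, ?_⟩, fun w => rfl⟩
  · intro m w
    have a1 := @opp1 M W _ _ mkt μ μ' h h' m w
    have a2 := @opp2 M W _ _ mkt μ μ' h h' m w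
    have a3 := @opp1 M W _ _ mkt μ' μ h' h m w
    have a4 := @opp2 M W _ _ mkt μ' μ h' h m w
    have c1 := μ.consistent m w
    have c2 := μ'.consistent m w
    constructor
    · intro hh
      split_ifs at hh with hc <;> grind
    · intro hh
      split_ifs at hh with hc <;> grind
  · intro m w hh
    have b1 := h.1.1 m w
    have b2 := h'.1.1 m w
    dsimp only at hh
    split_ifs at hh <;> grind
  · intro w m hh
    have b1 := h.1.2 w m
    have b2 := h'.1.2 w m
    dsimp only at hh
    split_ifs at hh <;> grind
  · rintro m w ⟨-, h1, h2⟩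
    have b1 := @lemB M W mkt μ h m w
    have b2 := @lemB M W mkt μ' h' m w
    dsimp only at h1 h2
    split_ifs at h1 h2 <;> grind

theorem exists_meet [Fintype M] [Fintype W] (mkt : Market M W) {μ μ' : Matching M W}
    (h : mkt.Stable μ) (h' : mkt.Stable μ') :
    ∃ σ : Matching M W, mkt.Stable σ ∧ mkt.IsMeet μ μ' σ := by
  refine ⟨⟨fun m => if mkt.mRank m (μ'.mu m) ≤ mkt.mRank m (μ.mu m) then μ.mu m else μ'.mu m,
    fun w => if mkt.wRank w (μ.nu w) ≤ mkt.wRank w (μ'.nu w) then μ.nu w else μ'.nu w, ?_⟩,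
    ⟨⟨?_, ?_⟩, ?_⟩, fun w => rfl⟩
  · intro m w
    have a1 := @opp1 M W _ _ mkt μ μ' h h' m w
    have a2 := @opp2 M W _ _ mkt μ μ' h h' m w
    have a3 := @opp1 M W _ _ mkt μ' μ h' h m w
    have a4 := @opp2 M W _ _ mkt μ' μ h' h m w
    have c1 := μ.consistent m w
    have c2 := μ'.consistent m w
    constructor
    · intro hh
      split_ifs at hh with hc <;> grind
    · intro hh
      split_ifs at hh with hc <;> grind
  · intro m w hh
    have b1 := h.1.1 m w
    have b2 := h'.1.1 m w
    dsimp only at hh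
    split_ifs at hh <;> grind
  · intro w m hh
    have b1 := h.1.2 w m
    have b2 := h'.1.2 w m
    dsimp only at hh
    split_ifs at hh <;> grind
  · rintro m w ⟨-, h1, h2⟩
    have b1 := @lemB M W mkt μ h m w
    have b2 := @lemB M W mkt μ' h' m w
    dsimp only at h1 h2
    split_ifs at h1 h2 <;> grind

/-- The lattice element `μ ∨ (μ' ∧ τ)`, for a cover `μ'` of `μ`, is `μ` or `μ'`. -/
theorem cover_mid [Fintype M] [Fintype W] (mkt : Market M W) {μ μ' τ : Matching M W}
    (h : mkt.Stable μ) (h' : mkt.Stable μ') (ht : mkt.Stable τ) (hc : mkt.Covers μ' μ) :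
    (∀ w, mkt.wRank w (μ.nu w) < mkt.wRank w (μ'.nu w) →
      mkt.wRank w (τ.nu w) ≤ mkt.wRank w (μ.nu w)) ∨
    (∀ w, mkt.wRank w (μ.nu w) < mkt.wRank w (μ'.nu w) →
      mkt.wRank w (μ'.nu w) ≤ mkt.wRank w (τ.nu w)) := by
  obtain ⟨σ, hs, hm⟩ := exists_meet mkt h' ht
  obtain ⟨κ, hk, hj⟩ := exists_join mkt h hs
  have d := hc.1.1
  have d1 : mkt.Dom μ' κ := by
    intro w
    have := hm w; have := hj w; have := d w
    grind
  have d2 : mkt.Dom κ μ := by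
    intro w
    have := hm w; have := hj w; have := d w
    grind
  by_cases e : κ = μ
  · left
    subst e
    intro w hw
    have := hm w; have := hj w; have := d w
    have := mkt.wRank_inj w (a₁ := κ.nu w) (a₂ := τ.nu w)
    grind
  · right
    have e2 : μ' = κ := by
      by_contra e2
      exact hc.2 ⟨κ, hk, ⟨d1, e2⟩, ⟨d2, e⟩⟩
    subst e2
    intro w hw
    have := hm w; have := hj w; have := d w
    grind

theorem elim_lt (mkt : Market M W) {μ μ' : Matching M W} {ρ : List (W × M)}
    (he : μ'.IsElimOf μ ρ) (hd : mkt.Dom μ' μ) (w : W) :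
    w ∈ ρ.map Prod.fst ↔ mkt.wRank w (μ.nu w) < mkt.wRank w (μ'.nu w) := by
  obtain ⟨h2, hn1, hn2, hmu, hmu', -, hout⟩ := he
  constructor
  · intro hw
    refine lt_of_le_of_ne (hd w) fun e => ?_
    have e := mkt.wRank_inj w e
    obtain ⟨i, hi, rfl⟩ := List.getElem_of_mem hw
    simp only [List.length_map] at hi
    simp only [List.getElem_map] at e
    have q1 := hmu ⟨i, hi⟩
    simp only [List.get_eq_getElem] at q1
    rw [q1] at e
    have q2 := (μ'.consistent _ _).2 e.symm
    have q3 := hmu' ⟨i, hi⟩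
    simp only [List.get_eq_getElem] at q3
    rw [q2] at q3
    have hl : (i + 1) % ρ.length < ρ.length := Nat.mod_lt _ (by omega)
    have q4 : (ρ.map Prod.fst)[i]'(by simpa using hi) =
        (ρ.map Prod.fst)[(i + 1) % ρ.length]'(by simpa using hl) := by
      simpa using q3
    have q5 := (hn1.getElem_inj_iff).1 q4
    rcases Nat.lt_or_ge (i + 1) ρ.length with hh | hh
    · rw [Nat.mod_eq_of_lt hh] at q5; omega
    · have : i + 1 = ρ.length := by omega
      rw [this, Nat.mod_self] at q5; omega
  · intro hw
    by_contra hc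
    rw [hout w hc] at hw
    exact lt_irrefl _ hw

theorem half [Fintype M] [Fintype W] (mkt : Market M W) {μ1 μ1' μ2 μ2' : Matching M W}
    {ρ1 ρ2 : List (W × M)} (s1 : mkt.Stable μ1) (s1' : mkt.Stable μ1') (s2 : mkt.Stable μ2)
    (s2' : mkt.Stable μ2') (e1 : μ1'.IsElimOf μ1 ρ1) (e2 : μ2'.IsElimOf μ2 ρ2)
    (c1 : mkt.Covers μ1' μ1) (c2 : mkt.Covers μ2' μ2) {w : W}
    (hw1 : w ∈ ρ1.map Prod.fst) (hw2 : w ∈ ρ2.map Prod.fst) (he : μ1.nu w = μ2.nu w)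
    (v : W) (hv : v ∈ ρ1.map Prod.fst) :
    mkt.wRank v (μ2.nu v) ≤ mkt.wRank v (μ1.nu v) ∧
    mkt.wRank v (μ1'.nu v) ≤ mkt.wRank v (μ2'.nu v) ∧ v ∈ ρ2.map Prod.fst := by
  have l1 := elim_lt mkt e1 c1.1.1
  have l2 := elim_lt mkt e2 c2.1.1
  have a1 := (l1 w).1 hw1
  have a2 := (l2 w).1 hw2
  have b := (l1 v).1 hv
  have k1 : mkt.wRank v (μ2.nu v) ≤ mkt.wRank v (μ1.nu v) := by
    rcases cover_mid mkt s1 s1' s2 c1 with k | k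
    · exact k v b
    · have := k w a1
      rw [he] at a1
      omega
  have k2 : mkt.wRank v (μ1'.nu v) ≤ mkt.wRank v (μ2'.nu v) := by
    rcases cover_mid mkt s1 s1' s2' c1 with k | k
    · have := k w a1
      rw [he] at this
      omega
    · exact k v b
  exact ⟨k1, k2, (l2 v).2 (by omega)⟩

end Helpers

/-- a pair `(w, m)` appears in at most one rotation in `Π`: any
two rotations containing the pair are equal up to cyclic shift. -/
theorem pair_in_at_most_one_rotation {M W : Type*} [Fintype M] [Fintype W]
    (mkt : Market M W) (ρ1 ρ2 : List (W × M))
    (h1 : mkt.InPi ρ1) (h2 : mkt.InPi ρ2)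
    (w : W) (m : M) (hmem1 : (w, m) ∈ ρ1) (hmem2 : (w, m) ∈ ρ2) :
    ρ1.IsRotated ρ2 := by
  obtain ⟨μ1, s1, μ1', e1, s1', c1⟩ := h1
  obtain ⟨μ2, s2, μ2', e2, s2', c2⟩ := h2
  have hw1 : w ∈ ρ1.map Prod.fst := List.mem_map.2 ⟨_, hmem1, rfl⟩
  have hw2 : w ∈ ρ2.map Prod.fst := List.mem_map.2 ⟨_, hmem2, rfl⟩
  obtain ⟨i0, hi0, g1⟩ := List.getElem_of_mem hmem1
  obtain ⟨j0, hj0, g2⟩ := List.getElem_of_mem hmem2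
  have he : μ1.nu w = μ2.nu w := by
    have q1 := e1.2.2.2.1 ⟨i0, hi0⟩
    have q2 := e2.2.2.2.1 ⟨j0, hj0⟩
    simp only [List.get_eq_getElem, g1] at q1
    simp only [List.get_eq_getElem, g2] at q2
    rw [q1, q2]
  have H1 := half mkt s1 s1' s2 s2' e1 e2 c1 c2 hw1 hw2 he
  have H2 := half mkt s2 s2' s1 s1' e2 e1 c2 c1 hw2 hw1 he.symm
  have E : ∀ v ∈ ρ1.map Prod.fst, μ1.nu v = μ2.nu v ∧ μ1'.nu v = μ2'.nu v := by
    intro v hv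
    have a := H1 v hv
    have b := H2 v a.2.2
    exact ⟨mkt.wRank_inj v (le_antisymm b.1 a.1), mkt.wRank_inj v (le_antisymm a.2.1 b.2.1)⟩
  have hlen : ρ1.length = ρ2.length := by
    have : (ρ1.map Prod.fst).Perm (ρ2.map Prod.fst) :=
      (List.perm_ext_iff_of_nodup e1.2.1 e2.2.1).2 fun v =>
        ⟨fun hv => (H1 v hv).2.2, fun hv => (H2 v hv).2.2⟩
    simpa using this.length_eq
  have p1 : 0 < ρ1.length := by omega
  have p2 : 0 < ρ2.length := by omega
  have key : ∀ k, ρ1[(i0 + k) % ρ1.length]'(Nat.mod_lt _ p1) =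
      ρ2[(j0 + k) % ρ2.length]'(Nat.mod_lt _ p2) := by
    intro k
    induction k with
    | zero => simp only [Nat.add_zero, Nat.mod_eq_of_lt hi0, Nat.mod_eq_of_lt hj0, g1, g2]
    | succ k ih =>
      have n1 := e1.2.2.2.2.1 ⟨(i0 + k) % ρ1.length, Nat.mod_lt _ p1⟩
      have n2 := e2.2.2.2.2.1 ⟨(j0 + k) % ρ2.length, Nat.mod_lt _ p2⟩
      simp only [List.get_eq_getElem, Nat.mod_add_mod] at n1 n2
      have t1 := e1.2.2.2.1 ⟨(i0 + (k + 1)) % ρ1.length, Nat.mod_lt _ p1⟩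
      have t2 := e2.2.2.2.1 ⟨(j0 + (k + 1)) % ρ2.length, Nat.mod_lt _ p2⟩
      simp only [List.get_eq_getElem] at t1 t2
      have hm : ρ1[(i0 + (k + 1)) % ρ1.length]'(Nat.mod_lt _ p1) ∈ ρ1 := List.getElem_mem _
      rw [ih] at n1
      simp only [Nat.add_assoc] at n1 n2
      generalize ρ1[(i0 + (k + 1)) % ρ1.length]'(Nat.mod_lt _ p1) = x at *
      generalize ρ2[(j0 + (k + 1)) % ρ2.length]'(Nat.mod_lt _ p2) = y at *
      have hx := E x.1 (List.mem_map.2 ⟨_, hm, rfl⟩)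
      have n3 := (μ1'.consistent _ _).1 n1
      rw [hx.2] at n3
      have n4 := (μ2'.consistent _ _).2 n3
      rw [n2] at n4
      have n5 := Option.some.inj n4
      rw [n5, ← hx.1, t1] at t2
      exact Prod.ext n5.symm (Option.some.inj t2)
  have hr : ρ1.rotate i0 = ρ2.rotate j0 := by
    apply List.ext_getElem
    · simpa using hlen
    · intro k hk1 hk2
      rw [List.getElem_rotate, List.getElem_rotate]
      have := key k
      simpa only [Nat.add_comm] using this
  have r1 : ρ1.IsRotated (ρ1.rotate i0) := ⟨i0, rfl⟩
  have r2 : ρ2.IsRotated (ρ2.rotate j0) := ⟨j0, rfl⟩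
  rw [hr] at r1
  exact r1.trans r2.symm
end

section
/- In a matching market with n men and n women, the number of rotations is at most n(n-1)/2, i.e., |Π| ≤ n(n-1)/2. -/
variable {M W : Type*}

namespace RotProof

def swapMkt {M W : Type*} (mkt : Market M W) : Market W M :=
  ⟨mkt.wRank, mkt.mRank, mkt.wRank_inj, mkt.mRank_inj⟩

def swapMat {M W : Type*} (μ : Matching M W) : Matching W M :=
  ⟨μ.nu, μ.mu, fun w m => (μ.consistent m w).symm⟩

theorem swap_stable {M W : Type*} {mkt : Market M W} {μ : Matching M W}
    (h : mkt.Stable μ) : (swapMkt mkt).Stable (swapMat μ) := by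
  obtain ⟨⟨h1, h2⟩, h3⟩ := h
  refine ⟨⟨h2, h1⟩, fun w m hb => h3 m w ⟨?_, hb.2.2, hb.2.1⟩⟩
  intro e
  exact hb.1 ((μ.consistent m w).1 e)

theorem no_block {M W : Type*} {mkt : Market M W} {μ : Matching M W}
    (h : mkt.Stable μ) (m : M) (w : W)
    (hm : mkt.mRank m (μ.mu m) < mkt.mRank m (some w))
    (hw : mkt.wRank w (μ.nu w) < mkt.wRank w (some m)) : False := by
  refine h.2 m w ⟨?_, hm, hw⟩
  intro e
  rw [e] at hm
  exact lt_irrefl _ hm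

theorem rank_none_le_w {M W : Type*} {mkt : Market M W} {μ : Matching M W}
    (h : mkt.Stable μ) (w : W) : mkt.wRank w none ≤ mkt.wRank w (μ.nu w) := by
  cases e : μ.nu w with
  | none => exact le_rfl
  | some m => exact (h.1.2 w m e).le

theorem rank_none_le_m {M W : Type*} {mkt : Market M W} {μ : Matching M W}
    (h : mkt.Stable μ) (m : M) : mkt.mRank m none ≤ mkt.mRank m (μ.mu m) := by
  cases e : μ.mu m with
  | none => exact le_rfl
  | some w => exact (h.1.1 m w e).le

/-- If `w` gets `m` as the better of the two then `w` is the worse of the two for `m`. -/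
theorem dual {M W : Type*} {mkt : Market M W} {μ ν : Matching M W}
    (hν : mkt.Stable ν) {m : M} {w : W} (e : μ.nu w = some m)
    (hle : mkt.wRank w (ν.nu w) ≤ mkt.wRank w (μ.nu w)) :
    mkt.mRank m (μ.mu m) ≤ mkt.mRank m (ν.mu m) := by
  have e' := (μ.consistent m w).2 e
  by_contra hlt
  push Not at hlt
  rw [e'] at hlt
  rw [e] at hle
  rcases hle.lt_or_eq with h | h
  · exact no_block hν m w hlt h
  · have := mkt.wRank_inj w h
    rw [(ν.consistent m w).2 this] at hlt
    exact lt_irrefl _ hlt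

theorem card_matched {M W : Type*} [Fintype M] [Fintype W] (μ : Matching M W) :
    (Finset.univ.filter (fun m => μ.mu m ≠ none)).card
      = (Finset.univ.filter (fun w => μ.nu w ≠ none)).card := by
  classical
  refine Finset.card_bij (fun m hm => (μ.mu m).get (by
      simpa [Option.isSome_iff_ne_none] using hm)) ?_ ?_ ?_
  · intro m hm
    simp only [Finset.mem_filter, Finset.mem_univ, true_and] at hm ⊢
    obtain ⟨w, hw⟩ := Option.ne_none_iff_exists'.1 hm
    simp [hw, (μ.consistent m w).1 hw]
  · intro m hm m' hm' h
    simp only [Finset.mem_filter, Finset.mem_univ, true_and] at hm hm'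
    obtain ⟨w, hw⟩ := Option.ne_none_iff_exists'.1 hm
    obtain ⟨w', hw'⟩ := Option.ne_none_iff_exists'.1 hm'
    simp only [hw, hw', Option.get_some] at h
    subst h
    have a := (μ.consistent m w).1 hw
    have b := (μ.consistent m' w).1 hw'
    rw [a] at b
    exact Option.some.inj b
  · intro w hw
    simp only [Finset.mem_filter, Finset.mem_univ, true_and] at hw
    obtain ⟨m, hm⟩ := Option.ne_none_iff_exists'.1 hw
    have a := (μ.consistent m w).2 hm
    exact ⟨m, by simp [a], by simp [a]⟩

theorem join_exists {M W : Type*} [Fintype M] [Fintype W] {mkt : Market M W}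
    {μ ν : Matching M W} (hμ : mkt.Stable μ) (hν : mkt.Stable ν) :
    ∃ σ : Matching M W, mkt.Stable σ ∧
      (∀ w, mkt.wRank w (σ.nu w) = max (mkt.wRank w (μ.nu w)) (mkt.wRank w (ν.nu w))) ∧
      (∀ m, mkt.mRank m (σ.mu m) = min (mkt.mRank m (μ.mu m)) (mkt.mRank m (ν.mu m))) := by
  classical
  obtain ⟨nu, hnu⟩ : ∃ nu : W → Option M, ∀ w,
      (nu w = μ.nu w ∧ mkt.wRank w (ν.nu w) ≤ mkt.wRank w (μ.nu w)) ∨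
      (nu w = ν.nu w ∧ mkt.wRank w (μ.nu w) ≤ mkt.wRank w (ν.nu w)) := by
    refine ⟨fun w => if mkt.wRank w (ν.nu w) ≤ mkt.wRank w (μ.nu w) then μ.nu w else ν.nu w, ?_⟩
    intro w
    by_cases h : mkt.wRank w (ν.nu w) ≤ mkt.wRank w (μ.nu w)
    · left; simp [h]
    · right; simp [h]; omega
  obtain ⟨mu, hmu⟩ : ∃ mu : M → Option W, ∀ m,
      (mu m = μ.mu m ∧ mkt.mRank m (μ.mu m) ≤ mkt.mRank m (ν.mu m)) ∨
      (mu m = ν.mu m ∧ mkt.mRank m (ν.mu m) ≤ mkt.mRank m (μ.mu m)) := by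
    refine ⟨fun m => if mkt.mRank m (μ.mu m) ≤ mkt.mRank m (ν.mu m) then μ.mu m else ν.mu m, ?_⟩
    intro m
    by_cases h : mkt.mRank m (μ.mu m) ≤ mkt.mRank m (ν.mu m)
    · left; simp [h]
    · right; simp [h]; omega
  have hw : ∀ w, mkt.wRank w (nu w) = max (mkt.wRank w (μ.nu w)) (mkt.wRank w (ν.nu w)) := by
    intro w
    rcases hnu w with ⟨h, h'⟩ | ⟨h, h'⟩
    · rw [h, max_eq_left h']
    · rw [h, max_eq_right h']
  have hm : ∀ m, mkt.mRank m (mu m) = min (mkt.mRank m (μ.mu m)) (mkt.mRank m (ν.mu m)) := by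
    intro m
    rcases hmu m with ⟨h, h'⟩ | ⟨h, h'⟩
    · rw [h, min_eq_left h']
    · rw [h, min_eq_right h']
  have fwd : ∀ m w, nu w = some m → mu m = some w := by
    intro m w h
    apply mkt.mRank_inj m
    rw [hm]
    rcases hnu w with ⟨e, h'⟩ | ⟨e, h'⟩
    · rw [h] at e
      rw [min_eq_left (dual hν e.symm h'), (μ.consistent m w).2 e.symm]
    · rw [h] at e
      rw [min_eq_right (dual hμ e.symm h'), (ν.consistent m w).2 e.symm]
  have sub1 : (Finset.univ.filter (fun m => mu m ≠ none)) ⊆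
      (Finset.univ.filter (fun m => μ.mu m ≠ none)) := by
    intro m h
    simp only [Finset.mem_filter, Finset.mem_univ, true_and] at h ⊢
    intro e
    apply h
    apply mkt.mRank_inj m
    have := rank_none_le_m hν m
    rw [hm, e, min_eq_left this]
  have sub2 : (Finset.univ.filter (fun w => μ.nu w ≠ none)) ⊆
      (Finset.univ.filter (fun w => nu w ≠ none)) := by
    intro w h
    simp only [Finset.mem_filter, Finset.mem_univ, true_and] at h ⊢
    intro e
    apply h
    apply mkt.wRank_inj w
    have h1 := rank_none_le_w hμ w
    have h2 := hw w
    rw [e] at h2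
    have := le_max_left (mkt.wRank w (μ.nu w)) (mkt.wRank w (ν.nu w))
    omega
  have hcard := (Finset.card_le_card sub1).trans
    ((card_matched μ).le.trans (Finset.card_le_card sub2))
  have bwd : ∀ m w, mu m = some w → nu w = some m := by
    intro m w h
    have key := Finset.surj_on_of_inj_on_of_card_le
      (s := Finset.univ.filter (fun w => nu w ≠ none))
      (t := Finset.univ.filter (fun m => mu m ≠ none))
      (fun w hw => (nu w).get (by simpa [Option.isSome_iff_ne_none] using hw))
      (by
        intro w hw
        simp only [Finset.mem_filter, Finset.mem_univ, true_and] at hw ⊢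
        obtain ⟨m, hm⟩ := Option.ne_none_iff_exists'.1 hw
        simp [hm, fwd m w hm])
      (by
        intro w w' hw hw' h
        simp only [Finset.mem_filter, Finset.mem_univ, true_and] at hw hw'
        obtain ⟨m, hm⟩ := Option.ne_none_iff_exists'.1 hw
        obtain ⟨m', hm'⟩ := Option.ne_none_iff_exists'.1 hw'
        simp only [hm, hm', Option.get_some] at h
        subst h
        have a := fwd _ _ hm
        have b := fwd _ _ hm'
        rw [a] at b
        exact Option.some.inj b)
      hcard m (by simp [h])
    obtain ⟨w', hw', e⟩ := key
    have e' : nu w' = some m := by rw [e]; simp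
    have := fwd _ _ e'
    rw [h] at this
    rw [Option.some.inj this, e']
  refine ⟨⟨mu, nu, fun m w => ⟨bwd m w, fwd m w⟩⟩, ⟨⟨?_, ?_⟩, ?_⟩, hw, hm⟩
  · intro m w h
    change mu m = some w at h
    rcases hmu m with ⟨e, _⟩ | ⟨e, _⟩
    · exact hμ.1.1 m w (e ▸ h)
    · exact hν.1.1 m w (e ▸ h)
  · intro w m h
    change nu w = some m at h
    rcases hnu w with ⟨e, _⟩ | ⟨e, _⟩
    · exact hμ.1.2 w m (e ▸ h)
    · exact hν.1.2 w m (e ▸ h)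
  · rintro m w ⟨-, h1, h2⟩
    change mkt.mRank m (mu m) < _ at h1
    change mkt.wRank w (nu w) < _ at h2
    rw [hw, max_lt_iff] at h2
    rcases hmu m with ⟨e, _⟩ | ⟨e, _⟩
    · exact no_block hμ m w (e ▸ h1) h2.1
    · exact no_block hν m w (e ▸ h1) h2.2

theorem meet_exists {M W : Type*} [Fintype M] [Fintype W] {mkt : Market M W}
    {μ ν : Matching M W} (hμ : mkt.Stable μ) (hν : mkt.Stable ν) :
    ∃ σ : Matching M W, mkt.Stable σ ∧
      (∀ w, mkt.wRank w (σ.nu w) = min (mkt.wRank w (μ.nu w)) (mkt.wRank w (ν.nu w))) := by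
  obtain ⟨σ, h, -, h2⟩ := join_exists (swap_stable hμ) (swap_stable hν)
  exact ⟨swapMat σ, swap_stable h, h2⟩

theorem mat_ext {M W : Type*} {mkt : Market M W} {μ ν : Matching M W}
    (h : ∀ w, mkt.wRank w (μ.nu w) = mkt.wRank w (ν.nu w)) : μ = ν := by
  have hnu : μ.nu = ν.nu := funext fun w => mkt.wRank_inj w (h w)
  have hmu : μ.mu = ν.mu := by
    funext m
    apply Option.ext
    intro w
    rw [μ.consistent, ν.consistent, hnu]
  cases μ; cases ν
  simp only at hnu hmu
  subst hnu; subst hmu; rfl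

/-- A stable matching between `μ` and its cover `μ'` is one of the two. -/
theorem cover_cases {M W : Type*} {mkt : Market M W} {μ μ' τ : Matching M W}
    (hc : mkt.Covers μ' μ) (hτ : mkt.Stable τ) (h1 : mkt.Dom τ μ) (h2 : mkt.Dom μ' τ) :
    τ = μ ∨ τ = μ' := by
  by_contra h
  push Not at h
  exact hc.2 ⟨τ, hτ, ⟨h2, h.2.symm⟩, ⟨h1, h.1⟩⟩

theorem half {M W : Type*} [Fintype M] [Fintype W] {mkt : Market M W}
    {μ μ' ν ν' : Matching M W} (hμ : mkt.Stable μ) (hμ' : mkt.Stable μ')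
    (hν : mkt.Stable ν) (hν' : mkt.Stable ν') (hc : mkt.Covers μ' μ) (hd : mkt.Covers ν' ν)
    (w : W) (e : μ.nu w = ν.nu w) (h1 : μ'.nu w ≠ μ.nu w) (h2 : ν'.nu w ≠ ν.nu w) (v : W)
    (hv : μ'.nu v ≠ μ.nu v) :
    mkt.wRank v (ν.nu v) ≤ mkt.wRank v (μ.nu v) ∧
    mkt.wRank v (μ'.nu v) ≤ mkt.wRank v (ν'.nu v) := by
  have lt1 : mkt.wRank w (μ.nu w) < mkt.wRank w (μ'.nu w) :=
    lt_of_le_of_ne (hc.1.1 w) fun h => h1 (mkt.wRank_inj w h).symm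
  have lt2 : mkt.wRank w (ν.nu w) < mkt.wRank w (ν'.nu w) :=
    lt_of_le_of_ne (hd.1.1 w) fun h => h2 (mkt.wRank_inj w h).symm
  have ltv : mkt.wRank v (μ.nu v) < mkt.wRank v (μ'.nu v) :=
    lt_of_le_of_ne (hc.1.1 v) fun h => hv (mkt.wRank_inj v h).symm
  have ew : mkt.wRank w (μ.nu w) = mkt.wRank w (ν.nu w) := by rw [e]
  constructor
  · obtain ⟨j, hj, hj1, -⟩ := join_exists hμ hν
    obtain ⟨τ, hτ, hτ1⟩ := meet_exists hμ' hj
    rcases cover_cases hc hτ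
      (fun u => by have := hτ1 u; have := hj1 u; have := hc.1.1 u; omega)
      (fun u => by have := hτ1 u; omega) with h | h
    · have := hτ1 v; have := hj1 v; rw [h] at *; omega
    · have := hτ1 w; have := hj1 w; rw [h] at *; omega
  · obtain ⟨j, hj, hj1⟩ := meet_exists hμ' hν'
    obtain ⟨τ, hτ, hτ1, -⟩ := join_exists hj hμ
    rcases cover_cases hc hτ
      (fun u => by have := hτ1 u; omega)
      (fun u => by have := hτ1 u; have := hj1 u; have := hc.1.1 u; omega) with h | h
    · have := hτ1 w; have := hj1 w; rw [h] at *; omega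
    · have := hτ1 v; have := hj1 v; rw [h] at *; omega

theorem agree {M W : Type*} [Fintype M] [Fintype W] {mkt : Market M W}
    {μ μ' ν ν' : Matching M W} (hμ : mkt.Stable μ) (hμ' : mkt.Stable μ')
    (hν : mkt.Stable ν) (hν' : mkt.Stable ν') (hc : mkt.Covers μ' μ) (hd : mkt.Covers ν' ν)
    (w : W) (e : μ.nu w = ν.nu w) (h1 : μ'.nu w ≠ μ.nu w) (h2 : ν'.nu w ≠ ν.nu w) (v : W)
    (hv : μ'.nu v ≠ μ.nu v) :
    ν'.nu v ≠ ν.nu v ∧ μ.nu v = ν.nu v ∧ μ'.nu v = ν'.nu v := by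
  have a := half hμ hμ' hν hν' hc hd w e h1 h2 v hv
  have ltv : mkt.wRank v (μ.nu v) < mkt.wRank v (μ'.nu v) :=
    lt_of_le_of_ne (hc.1.1 v) fun h => hv (mkt.wRank_inj v h).symm
  have hv' : ν'.nu v ≠ ν.nu v := by
    intro h
    rw [h] at a
    omega
  have b := half hν hν' hμ hμ' hd hc w e.symm h2 h1 v hv'
  exact ⟨hv', mkt.wRank_inj v (le_antisymm b.1 a.1), mkt.wRank_inj v (le_antisymm a.2 b.2)⟩

theorem next_ne {M W : Type*} {μ μ' : Matching M W} {ρ : List (W × M)}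
    (h : Matching.IsElimOf μ' μ ρ) (i : ℕ) (hi : i < ρ.length)
    (hj : (i + 1) % ρ.length < ρ.length) :
    (ρ[(i+1) % ρ.length]).1 ≠ (ρ[i]).1 := by
  obtain ⟨h2, hn, -⟩ := h
  intro e
  have : (ρ.map Prod.fst)[(i+1) % ρ.length]'(by simpa using hj)
      = (ρ.map Prod.fst)[i]'(by simpa using hi) := by simpa using e
  have := (hn.getElem_inj_iff).1 this
  by_cases hl : i + 1 < ρ.length
  · rw [Nat.mod_eq_of_lt hl] at this; omega
  · have h3 : i + 1 = ρ.length := by omega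
    rw [h3, Nat.mod_self] at this; omega

theorem moved {M W : Type*} {μ μ' : Matching M W} {ρ : List (W × M)}
    (h : Matching.IsElimOf μ' μ ρ) (i : ℕ) (hi : i < ρ.length) :
    μ'.nu (ρ[i]).1 ≠ μ.nu (ρ[i]).1 := by
  intro e
  have a := h.2.2.2.1 ⟨i, hi⟩
  have b := h.2.2.2.2.1 ⟨i, hi⟩
  simp only [List.get_eq_getElem] at a b
  rw [a] at e
  rw [(μ'.consistent _ _).2 e] at b
  exact next_ne h i hi _ (Option.some.inj b).symm

theorem sub {M W : Type*} [Fintype M] [Fintype W] {mkt : Market M W}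
    {μ μ' ν ν' : Matching M W} {ρ σ : List (W × M)}
    (hρ : Matching.IsElimOf μ' μ ρ) (hσ : Matching.IsElimOf ν' ν σ)
    (H : ∀ v, μ'.nu v ≠ μ.nu v →
      ν'.nu v ≠ ν.nu v ∧ μ.nu v = ν.nu v ∧ μ'.nu v = ν'.nu v) : ρ ⊆ σ := by
  intro p hp
  obtain ⟨i, hi, rfl⟩ := List.getElem_of_mem hp
  have a := hρ.2.2.2.1 ⟨i, hi⟩
  simp only [List.get_eq_getElem] at a
  obtain ⟨h1, h2, h3⟩ := H _ (moved hρ i hi)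
  by_cases hm : (ρ[i]).1 ∈ σ.map Prod.fst
  · obtain ⟨q, hq, e⟩ := List.mem_map.1 hm
    obtain ⟨j, hj, rfl⟩ := List.getElem_of_mem hq
    have b := hσ.2.2.2.1 ⟨j, hj⟩
    simp only [List.get_eq_getElem] at b
    rw [e, ← h2, a] at b
    have : ρ[i] = σ[j] := Prod.ext e.symm (Option.some.inj b)
    rw [this]; exact hq
  · exact absurd (hσ.2.2.2.2.2.2 _ hm) h1

theorem unique {M W : Type*} [Fintype M] [Fintype W] {mkt : Market M W}
    {ρ σ : List (W × M)} (hρ : mkt.InPi ρ) (hσ : mkt.InPi σ) (p : W × M)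
    (hpρ : p ∈ ρ) (hpσ : p ∈ σ) : ρ.IsRotated σ := by
  obtain ⟨μ, hμ, μ', eρ, hμ', hc⟩ := hρ
  obtain ⟨ν, hν, ν', eσ, hν', hd⟩ := hσ
  obtain ⟨i, hi, rfl⟩ := List.getElem_of_mem hpρ
  obtain ⟨j, hj, eij⟩ := List.getElem_of_mem hpσ
  have m1 := moved eρ i hi
  have m2 := moved eσ j hj
  have ew : μ.nu (ρ[i]).1 = ν.nu (ρ[i]).1 := by
    have a := eρ.2.2.2.1 ⟨i, hi⟩
    have b := eσ.2.2.2.1 ⟨j, hj⟩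
    simp only [List.get_eq_getElem] at a b
    rw [eij] at b
    rw [a, b]
  rw [eij] at m2
  have H := agree hμ hμ' hν hν' hc hd _ ew m1 m2
  have H' := agree hν hν' hμ hμ' hd hc _ ew.symm m2 m1
  have s1 := sub (mkt := mkt) eρ eσ H
  have s2 := sub (mkt := mkt) eσ eρ H'
  have nρ := List.Nodup.of_map _ eρ.2.1
  have nσ := List.Nodup.of_map _ eσ.2.1
  have hlen : ρ.length = σ.length :=
    le_antisymm (nρ.subperm s1).length_le (nσ.subperm s2).length_le
  have hpos : 0 < ρ.length := by omega
  have key : ∀ k : ℕ, ρ[(k + i) % ρ.length]'(Nat.mod_lt _ hpos)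
      = σ[(k + j) % σ.length]'(Nat.mod_lt _ (hlen ▸ hpos)) := by
    intro k
    induction k with
    | zero => simp only [Nat.zero_add, Nat.mod_eq_of_lt hi, Nat.mod_eq_of_lt hj, eij]
    | succ k ih =>
      have a := eρ.2.2.2.2.1 ⟨(k + i) % ρ.length, Nat.mod_lt _ hpos⟩
      have b := eσ.2.2.2.2.1 ⟨(k + j) % σ.length, Nat.mod_lt _ (hlen ▸ hpos)⟩
      simp only [List.get_eq_getElem, Nat.mod_add_mod] at a b
      rw [← ih] at b
      have r1 : k + 1 + i = k + i + 1 := by omega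
      have r2 : k + 1 + j = k + j + 1 := by omega
      simp only [r1, r2]
      have l1 : (k + i + 1) % ρ.length < ρ.length := Nat.mod_lt _ hpos
      have l2 : (k + j + 1) % σ.length < σ.length := Nat.mod_lt _ (hlen ▸ hpos)
      obtain ⟨-, h2, h3⟩ := H _ (moved eρ _ l1)
      have c := (μ'.consistent _ _).1 a
      rw [h3] at c
      rw [(ν'.consistent _ _).2 c] at b
      have b' := Option.some.inj b
      refine Prod.ext b' ?_
      have d := eρ.2.2.2.1 ⟨_, l1⟩
      have d' := eσ.2.2.2.1 ⟨_, l2⟩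
      simp only [List.get_eq_getElem] at d d'
      rw [← b', ← h2, d] at d'
      exact Option.some.inj d'
  have hrot : ρ.rotate i = σ.rotate j := by
    apply List.ext_getElem
    · simp [hlen]
    · intro k h h'
      rw [List.getElem_rotate, List.getElem_rotate]
      exact key k
  have t1 : ρ.IsRotated (ρ.rotate i) := ⟨i, rfl⟩
  have t2 : σ.IsRotated (σ.rotate j) := ⟨j, rfl⟩
  rw [hrot] at t1
  exact t1.trans t2.symm

/-- A man in a rotation moves to a strictly worse woman. -/
theorem worse {M W : Type*} {mkt : Market M W} {ρ : List (W × M)} (hρ : mkt.InPi ρ)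
    {w : W} {m : M} (h : (w, m) ∈ ρ) :
    ∃ w', mkt.mRank m (some w') < mkt.mRank m (some w) := by
  obtain ⟨μ, hμ, μ', eρ, hμ', hc⟩ := hρ
  obtain ⟨i, hi, e⟩ := List.getElem_of_mem h
  have a := eρ.2.2.2.1 ⟨i, hi⟩
  have b := eρ.2.2.2.2.1 ⟨i, hi⟩
  have hl : (i + 1) % ρ.length < ρ.length := Nat.mod_lt _ (by omega)
  have ne := next_ne eρ i hi hl
  simp only [List.get_eq_getElem] at a b
  simp only [e] at a b ne
  refine ⟨(ρ[(i+1) % ρ.length]).1, ?_⟩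
  generalize (ρ[(i+1) % ρ.length]).1 = w' at *
  have c := (μ'.consistent _ _).1 b
  have d := dual hμ c (hc.1.1 w')
  rw [b, (μ.consistent _ _).2 a] at d
  refine lt_of_le_of_ne d fun h => ne ?_
  exact Option.some.inj (mkt.mRank_inj m h)

theorem main {M W : Type*} [Fintype M] [Fintype W]
    (mkt : Market M W) (n : ℕ) (hM : Fintype.card M = n) (hW : Fintype.card W = n) :
    ∃ S : Finset (List (W × M)),
      (∀ ρ ∈ S, mkt.InPi ρ) ∧
      (∀ ρ : List (W × M), mkt.InPi ρ → ∃ ρ' ∈ S, ρ'.IsRotated ρ) ∧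
      S.card ≤ n * (n - 1) / 2 := by
  classical
  set Q : Finset (W × M) := Finset.univ.filter (fun p => ∃ ρ, mkt.InPi ρ ∧ p ∈ ρ) with hQ
  have memQ : ∀ p, p ∈ Q ↔ ∃ ρ, mkt.InPi ρ ∧ p ∈ ρ := by simp [hQ]
  have hQcard : Q.card ≤ (n - 1) * n := by
    have := Finset.card_le_mul_card_image_of_maps_to (s := Q) (t := (Finset.univ : Finset M))
      (f := Prod.snd) (fun _ _ => Finset.mem_univ _) (n - 1) ?_
    · rwa [Finset.card_univ, hM] at this
    · intro m _
      have hne : (Finset.univ : Finset W).Nonempty := by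
        rw [← Finset.card_pos, Finset.card_univ, hW, ← hM]
        exact Fintype.card_pos_iff.2 ⟨m⟩
      obtain ⟨w0, -, hw0⟩ := Finset.exists_min_image Finset.univ
        (fun w => mkt.mRank m (some w)) hne
      have : (Q.filter (fun p => p.2 = m)).card ≤ ((Finset.univ : Finset W).erase w0).card := by
        refine Finset.card_le_card_of_injOn Prod.fst ?_ ?_
        · rintro ⟨w, m'⟩ hp
          simp only [Finset.coe_filter, Set.mem_setOf_eq, memQ] at hp
          obtain ⟨⟨ρ, hρ, hp⟩, rfl⟩ := hp
          simp only [Finset.coe_erase, Finset.coe_univ, Set.mem_diff, Set.mem_univ, true_and,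
            Set.mem_singleton_iff]
          rintro rfl
          obtain ⟨w', hw'⟩ := worse hρ hp
          exact absurd (hw0 w' (Finset.mem_univ _)) (not_le.2 hw')
        · rintro ⟨w, m1⟩ h1 ⟨w', m2⟩ h2 h
          simp only [Finset.coe_filter, Set.mem_setOf_eq] at h1 h2 h
          exact Prod.ext h (h1.2.trans h2.2.symm)
      rwa [Finset.card_erase_of_mem (Finset.mem_univ _), Finset.card_univ, hW] at this
  have hf : ∀ p : W × M, ∃ ρ, p ∈ Q → mkt.InPi ρ ∧ p ∈ ρ := by
    intro p
    by_cases h : p ∈ Q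
    · obtain ⟨ρ, h'⟩ := (memQ p).1 h
      exact ⟨ρ, fun _ => h'⟩
    · exact ⟨[], fun h' => absurd h' h⟩
  choose f hf using hf
  set C : Finset (Cycle (W × M)) := Q.image (fun p => (f p : Cycle (W × M))) with hC
  have hC2 : 2 * C.card ≤ Q.card := by
    rw [hC]
    refine Finset.mul_card_image_le_card (s := Q)
      (f := fun p => (f p : Cycle (W × M))) 2 ?_
    intro c hc
    obtain ⟨p, hp, rfl⟩ := Finset.mem_image.1 hc
    obtain ⟨hρ, -⟩ := hf p hp
    have hρ' := hρ
    obtain ⟨μ, -, μ', eρ, -, -⟩ := hρ'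
    have hl := eρ.1
    have nρ := List.Nodup.of_map _ eρ.2.1
    have hsub : (f p).toFinset ⊆
        Q.filter (fun q => (f q : Cycle (W × M)) = (f p : Cycle (W × M))) := by
      intro q hq
      rw [List.mem_toFinset] at hq
      have hqQ : q ∈ Q := (memQ q).2 ⟨_, hρ, hq⟩
      rw [Finset.mem_filter]
      refine ⟨hqQ, Cycle.coe_eq_coe.2 ?_⟩
      exact unique (hf q hqQ).1 hρ q (hf q hqQ).2 hq
    have := Finset.card_le_card hsub
    rw [List.toFinset_card_of_nodup nρ] at this
    omega
  have hg : ∀ c : Cycle (W × M), ∃ ρ, c ∈ C → mkt.InPi ρ ∧ (ρ : Cycle (W × M)) = c := by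
    intro c
    by_cases h : c ∈ C
    · obtain ⟨p, hp, e⟩ := Finset.mem_image.1 h
      exact ⟨f p, fun _ => ⟨(hf p hp).1, e⟩⟩
    · exact ⟨[], fun h' => absurd h' h⟩
  choose g hg using hg
  refine ⟨C.image g, ?_, ?_, ?_⟩
  · intro ρ hρ
    obtain ⟨c, hc, rfl⟩ := Finset.mem_image.1 hρ
    exact (hg c hc).1
  · intro ρ hρ
    obtain ⟨p, hp⟩ : ∃ p, p ∈ ρ := by
      obtain ⟨μ, -, μ', eρ, -, -⟩ := hρ
      exact ⟨ρ[0]'(by have := eρ.1; omega), List.getElem_mem _⟩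
    have hpQ : p ∈ Q := (memQ p).2 ⟨ρ, hρ, hp⟩
    have hc : (f p : Cycle (W × M)) ∈ C := Finset.mem_image.2 ⟨p, hpQ, rfl⟩
    refine ⟨g (f p), Finset.mem_image_of_mem _ hc, ?_⟩
    have e1 := Cycle.coe_eq_coe.1 (hg _ hc).2
    exact e1.trans (unique (hf p hpQ).1 hρ p (hf p hpQ).2 hp)
  · have h1 : (C.image g).card ≤ C.card := Finset.card_image_le
    rw [Nat.le_div_iff_mul_le (by norm_num), mul_comm n]
    omega

end RotProof

/-- in a market with `n` men and `n` women there are at most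
`n(n-1)/2` rotations: some set of at most `n(n-1)/2` rotations contains a
representative of every rotation in `Π` up to cyclic shift. -/
theorem card_rotations_le {M W : Type*} [Fintype M] [Fintype W]
    (mkt : Market M W) (n : ℕ) (hM : Fintype.card M = n) (hW : Fintype.card W = n) :
    ∃ S : Finset (List (W × M)),
      (∀ ρ ∈ S, mkt.InPi ρ) ∧
      (∀ ρ : List (W × M), mkt.InPi ρ → ∃ ρ' ∈ S, ρ'.IsRotated ρ) ∧
      S.card ≤ n * (n - 1) / 2 := by
  exact RotProof.main mkt n hM hW
end

section
/- Let μ0 < μ1 < … < μk be a maximal chain in the woman-dominance order on stable matchings, where μ0 is the man-optimal stable matching, μk is the woman-optimal stable matching, and μ_{i+1} covers μ_i for each i. Then there is a unique sequence of rotations ρ_0, ρ_1, …, ρ_{k-1} ∈ Π such that μ_{i+1} is the elimination of ρ_i from μ_i for each i, and every rotation in Π appears exactly once in this sequence. -/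
variable {M W : Type*}

theorem Matching.eq_of_nu {μ ν : Matching M W} (h : ∀ w, μ.nu w = ν.nu w) : μ = ν := by
  have h1 : μ.nu = ν.nu := funext h
  have h2 : μ.mu = ν.mu := by
    funext m
    apply Option.ext
    intro w
    have a := μ.consistent m w
    have b := ν.consistent m w
    rw [h w] at a
    exact a.trans b.symm
  cases μ; cases ν; simp_all

theorem Market.eq_of_rank (mkt : Market M W) {μ ν : Matching M W}
    (h : ∀ w, mkt.wRank w (μ.nu w) = mkt.wRank w (ν.nu w)) : μ = ν :=
  Matching.eq_of_nu fun w => mkt.wRank_inj w (h w)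

theorem Market.decomp3 {mkt : Market M W} {μ ν : Matching M W} (hμ : mkt.Stable μ)
    (hν : mkt.Stable ν) (m : M) (h : mkt.mRank m (μ.mu m) < mkt.mRank m (ν.mu m)) :
    ∃ w, ν.mu m = some w ∧ mkt.wRank w (ν.nu w) < mkt.wRank w (μ.nu w) := by
  obtain hn | ⟨w, hw⟩ : ν.mu m = none ∨ ∃ w, ν.mu m = some w := by
    cases ν.mu m <;> simp
  · exfalso
    cases hm : μ.mu m with
    | none => rw [hn, hm] at h; exact lt_irrefl _ h
    | some w =>
      have := hμ.1.1 m w hm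
      rw [hn, hm] at h; omega
  · refine ⟨w, hw, ?_⟩
    have hνw := (ν.consistent m w).1 hw
    have hb := hμ.2 m w
    have hne : μ.mu m ≠ some w := by
      intro h'; rw [h', hw] at h; exact lt_irrefl _ h
    have h1 : ¬ mkt.wRank w (μ.nu w) < mkt.wRank w (some m) := by
      intro h'; exact hb ⟨hne, hw ▸ h, h'⟩
    rw [hνw]
    refine lt_of_le_of_ne (not_lt.1 h1) ?_
    intro h'
    exact hne ((μ.consistent m w).2 (mkt.wRank_inj w h').symm)

theorem Market.decomp4 {mkt : Market M W} {μ ν : Matching M W} (hμ : mkt.Stable μ)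
    (hν : mkt.Stable ν) (w : W) (h : mkt.wRank w (ν.nu w) < mkt.wRank w (μ.nu w)) :
    ∃ m, μ.nu w = some m ∧ mkt.mRank m (μ.mu m) < mkt.mRank m (ν.mu m) := by
  obtain hn | ⟨m, hm⟩ : μ.nu w = none ∨ ∃ m, μ.nu w = some m := by
    cases μ.nu w <;> simp
  · exfalso
    cases hm : ν.nu w with
    | none => rw [hn, hm] at h; exact lt_irrefl _ h
    | some m =>
      have := hν.1.2 w m hm
      rw [hn, hm] at h; omega
  · refine ⟨m, hm, ?_⟩
    have hμm := (μ.consistent m w).2 hm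
    have hb := hν.2 m w
    have hne : ν.mu m ≠ some w := by
      intro h'; rw [(ν.consistent m w).1 h', hm] at h; exact lt_irrefl _ h
    have h1 : ¬ mkt.mRank m (ν.mu m) < mkt.mRank m (some w) := by
      intro h'; exact hb ⟨hne, h', hm ▸ h⟩
    rw [hμm]
    refine lt_of_le_of_ne (not_lt.1 h1) ?_
    intro h'
    exact hne (mkt.mRank_inj m h').symm

theorem Market.decomp12 [Finite M] [Finite W] {mkt : Market M W} {μ ν : Matching M W}
    (hμ : mkt.Stable μ) (hν : mkt.Stable ν) :
    (∀ m, mkt.mRank m (μ.mu m) < mkt.mRank m (ν.mu m) →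
      ∃ w, μ.mu m = some w ∧ mkt.wRank w (ν.nu w) < mkt.wRank w (μ.nu w)) ∧
    (∀ w, mkt.wRank w (ν.nu w) < mkt.wRank w (μ.nu w) →
      ∃ m, ν.nu w = some m ∧ mkt.mRank m (μ.mu m) < mkt.mRank m (ν.mu m)) := by
  let A := {m : M // mkt.mRank m (μ.mu m) < mkt.mRank m (ν.mu m)}
  let B := {w : W // mkt.wRank w (ν.nu w) < mkt.wRank w (μ.nu w)}
  have hg : ∀ a : A, ∃ b : B, ν.mu a.1 = some b.1 := fun a => by
    obtain ⟨w, h1, h2⟩ := decomp3 hμ hν a.1 a.2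
    exact ⟨⟨w, h2⟩, h1⟩
  have hh : ∀ b : B, ∃ a : A, μ.nu b.1 = some a.1 := fun b => by
    obtain ⟨m, h1, h2⟩ := decomp4 hμ hν b.1 b.2
    exact ⟨⟨m, h2⟩, h1⟩
  choose g hg using hg
  choose h hh using hh
  have gi : Function.Injective g := by
    intro a a' e
    have h1 := (ν.consistent _ _).1 (hg a)
    have h2 := (ν.consistent _ _).1 (hg a')
    rw [e, h2] at h1
    exact Subtype.ext (Option.some.inj h1).symm
  have hi : Function.Injective h := by
    intro a a' e
    have h1 := (μ.consistent _ _).2 (hh a)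
    have h2 := (μ.consistent _ _).2 (hh a')
    rw [e, h2] at h1
    exact Subtype.ext (Option.some.inj h1).symm
  have s1 : Function.Surjective (h ∘ g) := Finite.injective_iff_surjective.1 (hi.comp gi)
  have s2 : Function.Surjective (g ∘ h) := Finite.injective_iff_surjective.1 (gi.comp hi)
  constructor
  · intro m hm
    obtain ⟨b, hb⟩ := s1.of_comp ⟨m, hm⟩
    refine ⟨b.1, (μ.consistent _ _).2 ?_, b.2⟩
    rw [hh b, hb]
  · intro w hw
    obtain ⟨a, ha⟩ := s2.of_comp ⟨w, hw⟩
    refine ⟨a.1, (ν.consistent _ _).1 ?_, a.2⟩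
    rw [hg a, ha]

theorem Market.pairIff [Finite M] [Finite W] {mkt : Market M W} {μ ν : Matching M W}
    (hμ : mkt.Stable μ) (hν : mkt.Stable ν) (m : M) (w : W)
    (h : μ.mu m = some w ∨ ν.mu m = some w) :
    mkt.mRank m (μ.mu m) < mkt.mRank m (ν.mu m) ↔
      mkt.wRank w (ν.nu w) < mkt.wRank w (μ.nu w) := by
  obtain ⟨h1, h2⟩ := decomp12 hμ hν
  constructor
  · intro hm
    rcases h with h | h
    · obtain ⟨w', e, h'⟩ := h1 m hm
      rw [h] at e; cases e; exact h'
    · obtain ⟨w', e, h'⟩ := decomp3 hμ hν m hm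
      rw [h] at e; cases e; exact h'
  · intro hw
    rcases h with h | h
    · obtain ⟨m', e, h'⟩ := decomp4 hμ hν w hw
      rw [(μ.consistent _ _).1 h] at e; cases e; exact h'
    · obtain ⟨m', e, h'⟩ := h2 w hw
      rw [(ν.consistent _ _).1 h] at e; cases e; exact h'

theorem Market.exists_join [Finite M] [Finite W] {mkt : Market M W} {μ ν : Matching M W}
    (hμ : mkt.Stable μ) (hν : mkt.Stable ν) :
    ∃ σ : Matching M W, mkt.Stable σ ∧
      ∀ w, mkt.wRank w (σ.nu w) = max (mkt.wRank w (μ.nu w)) (mkt.wRank w (ν.nu w)) := by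
  let σ : Matching M W :=
    { mu := fun m => if mkt.mRank m (ν.mu m) < mkt.mRank m (μ.mu m) then ν.mu m else μ.mu m
      nu := fun w => if mkt.wRank w (μ.nu w) < mkt.wRank w (ν.nu w) then ν.nu w else μ.nu w
      consistent := by
        intro m w
        have p := pairIff hν hμ m w
        have a := μ.consistent m w
        have b := ν.consistent m w
        split_ifs with h1 h2 h2
        · exact b
        · constructor
          · intro h; exact absurd ((p (Or.inl h)).1 h1) h2
          · intro h; exact absurd ((p (Or.inr (a.2 h))).1 h1) h2
        · constructor
          · intro h; exact absurd ((p (Or.inr h)).2 h2) h1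
          · intro h; exact absurd ((p (Or.inl (b.2 h))).2 h2) h1
        · exact a }
  have hm : ∀ m, (σ.mu m = ν.mu m ∨ σ.mu m = μ.mu m) := by
    intro m; simp only [σ]; split_ifs <;> simp
  have hw : ∀ w, (σ.nu w = ν.nu w ∨ σ.nu w = μ.nu w) := by
    intro m; simp only [σ]; split_ifs <;> simp
  have hr : ∀ w, mkt.wRank w (σ.nu w) = max (mkt.wRank w (μ.nu w)) (mkt.wRank w (ν.nu w)) := by
    intro w; simp only [σ]; split_ifs <;> omega
  refine ⟨σ, ⟨⟨?_, ?_⟩, ?_⟩, hr⟩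
  · intro m w h
    rcases hm m with e | e <;> rw [e] at h
    · exact hν.1.1 m w h
    · exact hμ.1.1 m w h
  · intro m w h
    rcases hw m with e | e <;> rw [e] at h
    · exact hν.1.2 m w h
    · exact hμ.1.2 m w h
  · rintro m w ⟨_, h2, h3⟩
    rw [hr w] at h3
    rcases hm m with e | e <;> rw [e] at h2
    · exact hν.2 m w ⟨fun h => by rw [h] at h2; exact lt_irrefl _ h2, h2, by omega⟩
    · exact hμ.2 m w ⟨fun h => by rw [h] at h2; exact lt_irrefl _ h2, h2, by omega⟩

theorem Market.exists_meet [Finite M] [Finite W] {mkt : Market M W} {μ ν : Matching M W}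
    (hμ : mkt.Stable μ) (hν : mkt.Stable ν) :
    ∃ σ : Matching M W, mkt.Stable σ ∧
      ∀ w, mkt.wRank w (σ.nu w) = min (mkt.wRank w (μ.nu w)) (mkt.wRank w (ν.nu w)) := by
  let σ : Matching M W :=
    { mu := fun m => if mkt.mRank m (μ.mu m) < mkt.mRank m (ν.mu m) then ν.mu m else μ.mu m
      nu := fun w => if mkt.wRank w (ν.nu w) < mkt.wRank w (μ.nu w) then ν.nu w else μ.nu w
      consistent := by
        intro m w
        have p := pairIff hμ hν m w
        have a := μ.consistent m w
        have b := ν.consistent m w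
        split_ifs with h1 h2 h2
        · exact b
        · constructor
          · intro h; exact absurd ((p (Or.inr h)).1 h1) h2
          · intro h; exact absurd ((p (Or.inl (a.2 h))).1 h1) h2
        · constructor
          · intro h; exact absurd ((p (Or.inl h)).2 h2) h1
          · intro h; exact absurd ((p (Or.inr (b.2 h))).2 h2) h1
        · exact a }
  have hm : ∀ m, (σ.mu m = ν.mu m ∨ σ.mu m = μ.mu m) := by
    intro m; simp only [σ]; split_ifs <;> simp
  have hw : ∀ w, (σ.nu w = ν.nu w ∨ σ.nu w = μ.nu w) := by
    intro m; simp only [σ]; split_ifs <;> simp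
  have hr : ∀ w, mkt.wRank w (σ.nu w) = min (mkt.wRank w (μ.nu w)) (mkt.wRank w (ν.nu w)) := by
    intro w; simp only [σ]; split_ifs <;> omega
  have hr' : ∀ m, mkt.mRank m (σ.mu m) = max (mkt.mRank m (μ.mu m)) (mkt.mRank m (ν.mu m)) := by
    intro w; simp only [σ]; split_ifs <;> omega
  refine ⟨σ, ⟨⟨?_, ?_⟩, ?_⟩, hr⟩
  · intro m w h
    rcases hm m with e | e <;> rw [e] at h
    · exact hν.1.1 m w h
    · exact hμ.1.1 m w h
  · intro m w h
    rcases hw m with e | e <;> rw [e] at h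
    · exact hν.1.2 m w h
    · exact hμ.1.2 m w h
  · rintro m w ⟨_, h2, h3⟩
    rw [hr' m] at h2
    rcases hw w with e | e <;> rw [e] at h3
    · refine hν.2 m w ⟨fun h => ?_, by omega, h3⟩
      rw [(ν.consistent m w).1 h] at h3; exact lt_irrefl _ h3
    · refine hμ.2 m w ⟨fun h => ?_, by omega, h3⟩
      rw [(μ.consistent m w).1 h] at h3; exact lt_irrefl _ h3

theorem Market.exists_med [Finite M] [Finite W] {mkt : Market M W} {α ν ν' : Matching M W}
    (hα : mkt.Stable α) (hν : mkt.Stable ν) (hν' : mkt.Stable ν') :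
    ∃ σ : Matching M W, mkt.Stable σ ∧
      ∀ w, mkt.wRank w (σ.nu w) =
        min (max (mkt.wRank w (α.nu w)) (mkt.wRank w (ν.nu w))) (mkt.wRank w (ν'.nu w)) := by
  obtain ⟨σ, h1, h2⟩ := exists_join hα hν
  obtain ⟨τ, h3, h4⟩ := exists_meet h1 hν'
  exact ⟨τ, h3, fun w => by rw [h4, h2]⟩

/-- In a covering interval, the median is one of the end points. -/
theorem Market.med_cases [Finite M] [Finite W] {mkt : Market M W} {α ν ν' : Matching M W}
    (hα : mkt.Stable α) (hν : mkt.Stable ν) (hν' : mkt.Stable ν') (hc : mkt.Covers ν' ν) :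
    (∀ w, min (max (mkt.wRank w (α.nu w)) (mkt.wRank w (ν.nu w))) (mkt.wRank w (ν'.nu w))
      = mkt.wRank w (ν.nu w)) ∨
    (∀ w, min (max (mkt.wRank w (α.nu w)) (mkt.wRank w (ν.nu w))) (mkt.wRank w (ν'.nu w))
      = mkt.wRank w (ν'.nu w)) := by
  obtain ⟨σ, h1, h2⟩ := exists_med hα hν hν'
  simp only [← h2]
  by_cases e : σ = ν
  · left; intro w; rw [e]
  by_cases e' : σ = ν'
  · right; intro w; rw [e']
  exfalso
  refine hc.2 ⟨σ, h1, ⟨fun w => ?_, Ne.symm e'⟩, ⟨fun w => ?_, e⟩⟩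
  · rw [h2]; exact min_le_right _ _
  · rw [h2]; exact le_min (le_max_right _ _) (hc.1.1 w)

theorem Matching.IsElimOf.next_ne {μ μ' : Matching M W} {ρ : List (W × M)}
    (h : Matching.IsElimOf μ' μ ρ) (i : ℕ) (hi : i < ρ.length) :
    μ'.mu (ρ[i]).2 ≠ some (ρ[i]).1 := by
  obtain ⟨h1, h2, h3, h4, h5, h6, h7⟩ := h
  have := h5 ⟨i, hi⟩
  simp only [List.get_eq_getElem] at this
  rw [this]
  intro e
  have e := Option.some.inj e
  have hlt : (i+1) % ρ.length < ρ.length := Nat.mod_lt _ (by omega)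
  have : (i+1) % ρ.length = i := by
    apply (List.Nodup.getElem_inj_iff h2 (hi := by simpa using hlt) (hj := by simpa using hi)).1
    simpa using e
  by_cases hh : i + 1 = ρ.length
  · rw [hh, Nat.mod_self] at this; omega
  · rw [Nat.mod_eq_of_lt (by omega)] at this; omega

theorem Matching.IsElimOf.women {μ μ' : Matching M W} {ρ : List (W × M)}
    (h : Matching.IsElimOf μ' μ ρ) (w : W) : w ∈ ρ.map Prod.fst ↔ μ.nu w ≠ μ'.nu w := by
  constructor
  · intro hw e
    obtain ⟨p, hp, rfl⟩ := List.mem_map.1 hw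
    obtain ⟨i, hi, rfl⟩ := List.getElem_of_mem hp
    apply h.next_ne i hi
    rw [μ'.consistent, ← e]
    exact h.2.2.2.1 ⟨i, hi⟩
  · intro e
    by_contra hw
    exact e (h.2.2.2.2.2.2 w hw).symm

theorem Matching.IsElimOf.start {μ μ' : Matching M W} {ρ ρ' : List (W × M)}
    (h : Matching.IsElimOf μ' μ ρ) (h' : Matching.IsElimOf μ' μ ρ') {p : W × M}
    (hp : p ∈ ρ') : p ∈ ρ := by
  obtain ⟨i, hi, rfl⟩ := List.getElem_of_mem hp
  have hm : (ρ'[i]).2 ∈ ρ.map Prod.snd := by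
    by_contra hc
    have h6 := h.2.2.2.2.2.1 _ hc
    apply h'.next_ne i hi
    rw [h6, μ.consistent]
    exact h'.2.2.2.1 ⟨i, hi⟩
  obtain ⟨q, hq, e⟩ := List.mem_map.1 hm
  obtain ⟨j, hj, rfl⟩ := List.getElem_of_mem hq
  have a := (μ.consistent _ _).2 (h'.2.2.2.1 ⟨i, hi⟩)
  have b := (μ.consistent _ _).2 (h.2.2.2.1 ⟨j, hj⟩)
  simp only [List.get_eq_getElem] at a b
  rw [← e, b] at a
  rwa [show ρ'[i] = ρ[j] from Prod.ext (Option.some.inj a).symm e.symm]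

theorem Matching.IsElimOf.isRotated {μ μ' : Matching M W} {ρ ρ' : List (W × M)}
    (h : Matching.IsElimOf μ' μ ρ) (h' : Matching.IsElimOf μ' μ ρ') : ρ'.IsRotated ρ := by
  have l := h.1
  have l' := h'.1
  have h0 : 0 < ρ'.length := by omega
  obtain ⟨j, hj, ej⟩ := List.getElem_of_mem (h.start h' (List.getElem_mem h0))
  have nd : ρ.Nodup := List.Nodup.of_map _ h.2.1
  have nd' : ρ'.Nodup := List.Nodup.of_map _ h'.2.1
  have m1 : ∀ i, i % ρ'.length < ρ'.length := fun i => Nat.mod_lt _ (by omega)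
  have m2 : ∀ i, i % ρ.length < ρ.length := fun i => Nat.mod_lt _ (by omega)
  have key : ∀ i, ρ'[i % ρ'.length]'(m1 i) = ρ[(j + i) % ρ.length]'(m2 _) := by
    intro i
    induction i with
    | zero => simp [Nat.mod_eq_of_lt hj, ej]
    | succ i ih =>
      have a := h'.2.2.2.2.1 ⟨_, m1 i⟩
      have b := h.2.2.2.2.1 ⟨_, m2 (j+i)⟩
      simp only [List.get_eq_getElem, Nat.mod_add_mod] at a b
      rw [ih, b] at a
      have a := Option.some.inj a
      have c := h'.2.2.2.1 ⟨_, m1 (i+1)⟩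
      have d := h.2.2.2.1 ⟨_, m2 (j+i+1)⟩
      simp only [List.get_eq_getElem] at c d
      rw [a, c] at d
      exact Prod.ext a.symm (Option.some.inj d)
  have d1 : ρ.length ∣ ρ'.length := by
    have := key ρ'.length
    simp only [Nat.mod_self] at this
    rw [← ej] at this
    have := (nd.getElem_inj_iff).1 this
    have hh : (j + 0) ≡ (j + ρ'.length) [MOD ρ.length] := by
      unfold Nat.ModEq; rw [← this]; simp [Nat.mod_eq_of_lt hj]
    exact (Nat.modEq_zero_iff_dvd).1 (Nat.ModEq.add_left_cancel' j hh).symm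
  have d2 : ρ'.length ∣ ρ.length := by
    have := key ρ.length
    simp only [Nat.add_mod_right, Nat.mod_eq_of_lt hj] at this
    rw [ej] at this
    exact Nat.dvd_of_mod_eq_zero ((nd'.getElem_inj_iff).1 this)
  have le := Nat.dvd_antisymm d1 d2
  have : ρ' = ρ.rotate j := by
    apply List.ext_getElem
    · simp [le]
    · intro i hi hi2
      rw [List.getElem_rotate]
      have := key i
      simp only [Nat.mod_eq_of_lt hi] at this
      rw [this]
      simp only [Nat.add_comm]
  rw [this]
  exact (List.IsRotated.symm ⟨j, rfl⟩)

theorem Matching.IsElimOf.transfer {μ μ' ν ν' : Matching M W} {σ : List (W × M)}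
    (h : Matching.IsElimOf ν' ν σ)
    (h1 : ∀ w, ν.nu w ≠ ν'.nu w → μ.nu w = ν.nu w ∧ μ'.nu w = ν'.nu w)
    (h2 : ∀ w, ν.nu w = ν'.nu w → μ.nu w = μ'.nu w) : Matching.IsElimOf μ' μ σ := by
  have mem : ∀ i : Fin σ.length, ν.nu (σ.get i).1 ≠ ν'.nu (σ.get i).1 := fun i =>
    (h.women _).1 (List.mem_map_of_mem (List.get_mem _ _))
  have hw := h.women
  obtain ⟨a1, a2, a3, a4, a5, a6, a7⟩ := h
  refine ⟨a1, a2, a3, ?_, ?_, ?_, ?_⟩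
  · intro i
    rw [(h1 _ (mem i)).1, a4]
  · intro i
    rw [μ'.consistent, (h1 _ (mem _)).2, ← ν'.consistent, a5]
  · intro m hm
    have e := a6 m hm
    apply Option.ext
    intro w
    have b := ν.consistent m w
    have c := ν'.consistent m w
    show μ'.mu m = some w ↔ μ.mu m = some w
    rw [μ.consistent, μ'.consistent]
    by_cases hn : ν.nu w = ν'.nu w
    · rw [h2 w hn]
    · rw [(h1 w hn).1, (h1 w hn).2, ← b, ← c, e]
  · intro w hn
    rw [hw, not_not] at hn
    exact (h2 w hn).symm

theorem Market.cover_elim [Finite M] [Finite W] {mkt : Market M W} {μ μ' : Matching M W}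
    (hμ : mkt.Stable μ) (hμ' : mkt.Stable μ') (hc : mkt.Covers μ' μ) :
    ∃ ρ, Matching.IsElimOf μ' μ ρ := by
  classical
  obtain ⟨⟨hdom, hne⟩, hmin⟩ := hc
  let D := {m : M // mkt.mRank m (μ'.mu m) < mkt.mRank m (μ.mu m)}
  have hwife : ∀ m : D, ∃ w, μ.mu m.1 = some w := fun m =>
    let ⟨w, h, _⟩ := decomp3 hμ' hμ m.1 m.2
    ⟨w, h⟩
  choose wife hwife using hwife
  have hf : ∀ m : D, ∃ m' : D,
      mkt.mRank m.1 (some (wife m')) < mkt.mRank m.1 (μ.mu m.1) ∧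
      mkt.wRank (wife m') (some m'.1) < mkt.wRank (wife m') (some m.1) ∧
      (∀ w, mkt.mRank m.1 (some (wife m')) < mkt.mRank m.1 (some w) →
        mkt.mRank m.1 (some w) < mkt.mRank m.1 (μ.mu m.1) →
        ¬ mkt.wRank w (μ.nu w) < mkt.wRank w (some m.1)) ∧
      mkt.wRank (wife m') (some m.1) ≤ mkt.wRank (wife m') (μ'.nu (wife m')) ∧
      mkt.mRank m.1 (μ'.mu m.1) ≤ mkt.mRank m.1 (some (wife m')) := by
    intro m
    obtain ⟨w0, hw0, hw0'⟩ := (decomp12 hμ' hμ).1 m.1 m.2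
    have hw0m := (μ'.consistent _ _).1 hw0
    let S : Set W := {w | mkt.mRank m.1 (some w) < mkt.mRank m.1 (μ.mu m.1) ∧
      mkt.wRank w (μ.nu w) < mkt.wRank w (some m.1)}
    have hS : w0 ∈ S := ⟨hw0 ▸ m.2, hw0m ▸ hw0'⟩
    obtain ⟨w, hwS, hwmax⟩ := Set.exists_max_image S (fun w => mkt.mRank m.1 (some w))
      (Set.toFinite S) ⟨w0, hS⟩
    have hle := hwmax w0 hS
    have hwle : mkt.wRank w (some m.1) ≤ mkt.wRank w (μ'.nu w) := by
      by_contra hlt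
      have hlt := not_le.1 hlt
      by_cases e : w = w0
      · rw [e, hw0m] at hlt; exact lt_irrefl _ hlt
      · refine hμ'.2 m.1 w ⟨?_, ?_, hlt⟩
        · rw [hw0]; intro h; exact e (Option.some.inj h).symm
        · rw [hw0]
          refine lt_of_le_of_ne hle ?_
          intro h; exact e (Option.some.inj (mkt.mRank_inj _ h)).symm
    obtain ⟨m', hm', hm'D⟩ := (decomp12 hμ' hμ).2 w (lt_of_lt_of_le hwS.2 hwle)
    have hww : wife ⟨m', hm'D⟩ = w := by
      have := (μ.consistent _ _).2 hm'
      have h2 := hwife ⟨m', hm'D⟩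
      simp only at h2
      rw [this] at h2
      exact (Option.some.inj h2).symm
    refine ⟨⟨m', hm'D⟩, ?_⟩
    rw [hww]
    refine ⟨hwS.1, hm' ▸ hwS.2, ?_, hwle, hw0 ▸ hle⟩
    intro w2 h1 h2 h3
    have := hwmax w2 ⟨h2, h3⟩
    omega
  choose f f1 f2 f3 f4 f5 using hf
  have wife_inj : Function.Injective wife := by
    intro a b e
    have h1 := (μ.consistent _ _).1 (hwife a)
    have h2 := (μ.consistent _ _).1 (hwife b)
    rw [e, h2] at h1
    exact Subtype.ext (Option.some.inj h1).symm
  -- D is nonempty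
  have hDne : ∃ x : D, True := by
    by_contra hno
    apply hne
    apply mkt.eq_of_rank
    intro w
    refine le_antisymm ?_ (hdom w)
    by_contra hlt
    obtain ⟨m, _, hm⟩ := decomp4 hμ' hμ w (not_le.1 hlt)
    exact hno ⟨⟨m, hm⟩, trivial⟩
  obtain ⟨x, -⟩ := hDne
  -- a periodic point
  obtain ⟨y, hy⟩ : ∃ y : D, y ∈ Function.periodicPts f := by
    obtain ⟨a, b, hab, e⟩ := Finite.exists_ne_map_eq_of_infinite (fun n : ℕ => f^[n] x)
    wlog hlt : a < b generalizing a b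
    · exact this b a hab.symm e.symm (by omega)
    refine ⟨f^[a] x, Function.mk_mem_periodicPts (n := b - a) (by omega) ?_⟩
    unfold Function.IsPeriodicPt Function.IsFixedPt
    rw [← Function.iterate_add_apply]
    change f^[a] x = f^[b] x at e
    rw [e]; congr 2; omega
  set n := Function.minimalPeriod f y with hn
  have npos : 0 < n := Function.minimalPeriod_pos_of_mem_periodicPts hy
  have hper : f^[n] y = y := Function.iterate_minimalPeriod
  have hinj : ∀ i j, i < n → j < n → f^[i] y = f^[j] y → i = j := by
    intro i j hi hj e
    exact (Function.iterate_eq_iterate_iff_of_lt_minimalPeriod hi hj).1 e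
  let c : ℕ → D := fun i => f^[i] y
  have cs : ∀ i, c (i+1) = f (c i) := fun i => Function.iterate_succ_apply' f i y
  have cmod : ∀ i, c (i % n) = c i := fun i => Function.iterate_mod_minimalPeriod_eq
  have cinj : ∀ i j, i < n → j < n → c i = c j → i = j := hinj
  let C : Set M := {m | ∃ i, (c i).1 = m}
  have fne : ∀ m, f m ≠ m := by
    intro m e
    have := f2 m
    rw [e] at this; exact lt_irrefl _ this
  have n2 : 2 ≤ n := by
    by_contra h
    have : n = 1 := by omega
    rw [this] at hper
    exact fne y hper
  have cpred : ∀ i, ∃ j, c (j+1) = c i := by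
    intro i
    refine ⟨i + n - 1, ?_⟩
    rw [← cmod i, ← cmod (i + n - 1 + 1), show i + n - 1 + 1 = i + n by omega, Nat.add_mod_right]
  have csinj : ∀ i j, c (i+1) = c (j+1) → c i = c j := by
    intro i j e
    have key : ∀ i, c (i + 1 + (n-1)) = c i := by
      intro i
      rw [← cmod i, ← cmod (i + 1 + (n-1)), show i + 1 + (n-1) = i + n by omega, Nat.add_mod_right]
    have add : ∀ t, c (i + 1 + t) = c (j + 1 + t) := by
      intro t
      induction t with
      | zero => exact e
      | succ t ih => rw [← Nat.add_assoc, ← Nat.add_assoc, cs, cs, ih]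
    rw [← key i, ← key j, add]
  -- the new matching, described by relations
  have exmu : ∀ m : M, ∃ o : Option W, (∀ i, (c i).1 = m → o = some (wife (c (i+1)))) ∧
      (m ∉ C → o = μ.mu m) := by
    intro m
    by_cases h : m ∈ C
    · obtain ⟨i, hi⟩ := h
      refine ⟨some (wife (c (i+1))), ?_, fun h' => absurd ⟨i, hi⟩ h'⟩
      intro j hj
      have : c i = c j := Subtype.ext (hi.trans hj.symm)
      rw [cs, cs, this]
    · exact ⟨μ.mu m, fun i hi => absurd ⟨i, hi⟩ h, fun _ => rfl⟩
  have exnu : ∀ w : W, ∃ o : Option M, (∀ i, wife (c (i+1)) = w → o = some (c i).1) ∧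
      ((∀ i, wife (c (i+1)) ≠ w) → o = μ.nu w) := by
    intro w
    by_cases h : ∃ i, wife (c (i+1)) = w
    · obtain ⟨i, hi⟩ := h
      refine ⟨some (c i).1, ?_, fun h' => absurd hi (h' i)⟩
      intro j hj
      rw [csinj i j (wife_inj (hi.trans hj.symm))]
    · exact ⟨μ.nu w, fun i hi => absurd ⟨i, hi⟩ h, fun _ => rfl⟩
  choose mu mu1 mu2 using exmu
  choose nu nu1 nu2 using exnu
  have wc : ∀ i, μ.nu (wife (c i)) = some (c i).1 := fun i => (μ.consistent _ _).1 (hwife _)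
  let τ : Matching M W :=
    { mu := mu
      nu := nu
      consistent := by
        intro m w
        constructor
        · intro h
          by_cases hm : m ∈ C
          · obtain ⟨i, rfl⟩ := hm
            rw [mu1 _ i rfl] at h
            exact nu1 w i (Option.some.inj h)
          · rw [mu2 m hm] at h
            have hw := (μ.consistent _ _).1 h
            rw [nu2 w, hw]
            rintro i rfl
            rw [wc] at hw
            exact hm ⟨i+1, Option.some.inj hw⟩
        · intro h
          by_cases hw : ∃ i, wife (c (i+1)) = w
          · obtain ⟨i, rfl⟩ := hw
            rw [nu1 _ i rfl] at h
            exact mu1 _ i (Option.some.inj h)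
          · push Not at hw
            rw [nu2 w hw] at h
            have hm := (μ.consistent _ _).2 h
            rw [mu2 m, hm]
            rintro ⟨i, rfl⟩
            obtain ⟨j, hj⟩ := cpred i
            apply hw j
            rw [hj]
            rw [hwife] at hm
            exact Option.some.inj hm }
  have up : ∀ w, mkt.wRank w (μ.nu w) ≤ mkt.wRank w (nu w) := by
    intro w
    by_cases hw : ∃ i, wife (c (i+1)) = w
    · obtain ⟨i, rfl⟩ := hw
      rw [nu1 _ i rfl, wc, cs]
      exact (f2 _).le
    · push Not at hw
      rw [nu2 w hw]
  have dn : ∀ w, mkt.wRank w (nu w) ≤ mkt.wRank w (μ'.nu w) := by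
    intro w
    by_cases hw : ∃ i, wife (c (i+1)) = w
    · obtain ⟨i, rfl⟩ := hw
      rw [nu1 _ i rfl, cs]
      exact f4 _
    · push Not at hw
      rw [nu2 w hw]; exact hdom w
  have irM : ∀ m, mkt.mRank m none ≤ mkt.mRank m (μ'.mu m) := by
    intro m
    cases e : μ'.mu m with
    | none => exact le_rfl
    | some w => exact (hμ'.1.1 m w e).le
  have irW : ∀ w, mkt.wRank w none ≤ mkt.wRank w (μ.nu w) := by
    intro w
    cases e : μ.nu w with
    | none => exact le_rfl
    | some m => exact (hμ.1.2 w m e).le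
  have hτ : mkt.Stable τ := by
    refine ⟨⟨?_, ?_⟩, ?_⟩
    · intro m w h
      change mu m = some w at h
      by_cases hm : m ∈ C
      · obtain ⟨i, rfl⟩ := hm
        rw [mu1 _ i rfl, cs] at h
        have h := Option.some.inj h
        have a := f5 (c i)
        rw [h] at a
        refine lt_of_le_of_ne ((irM _).trans a) ?_
        intro e
        have := mkt.mRank_inj _ e
        simp at this
      · rw [mu2 m hm] at h
        exact hμ.1.1 m w h
    · intro w m h
      change nu w = some m at h
      have := up w
      rw [h] at this
      refine lt_of_le_of_ne ((irW w).trans this) ?_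
      intro e
      have := mkt.wRank_inj _ e
      simp at this
    · rintro m w ⟨_, h2, h3⟩
      change mkt.mRank m (mu m) < _ at h2
      change mkt.wRank w (nu w) < _ at h3
      have h4 := lt_of_le_of_lt (up w) h3
      have hne : μ.mu m ≠ some w := by
        intro h
        rw [(μ.consistent _ _).1 h] at h4; exact lt_irrefl _ h4
      have hb : ¬ mkt.mRank m (μ.mu m) < mkt.mRank m (some w) := fun h =>
        hμ.2 m w ⟨hne, h, h4⟩
      by_cases hm : m ∈ C
      · obtain ⟨i, rfl⟩ := hm
        rw [mu1 _ i rfl, cs] at h2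
        refine f3 (c i) w h2 ?_ h4
        refine lt_of_le_of_ne (not_lt.1 hb) ?_
        intro e
        exact hne (mkt.mRank_inj _ e).symm
      · rw [mu2 m hm] at h2
        exact hb h2
  let ρ : List (W × M) := List.ofFn (fun i : Fin n => (wife (c i), (c i).1))
  have hlen : ρ.length = n := List.length_ofFn
  have hget : ∀ i (hi : i < ρ.length), ρ[i] = (wife (c i), (c i).1) := by
    intro i hi; simp [ρ]
  have hmemC : ∀ i, (wife (c i), (c i).1) ∈ ρ := by
    intro i
    have hlt : i % n < ρ.length := by rw [hlen]; exact Nat.mod_lt _ npos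
    rw [← cmod i, ← hget _ hlt]
    exact List.getElem_mem hlt
  have hel : Matching.IsElimOf τ μ ρ := by
    refine ⟨by omega, ?_, ?_, ?_, ?_, ?_, ?_⟩
    · rw [List.map_ofFn, List.nodup_ofFn]
      intro i j e
      exact Fin.ext (cinj _ _ i.2 j.2 (wife_inj e))
    · rw [List.map_ofFn, List.nodup_ofFn]
      intro i j e
      exact Fin.ext (cinj _ _ i.2 j.2 (Subtype.ext e))
    · intro i
      rw [List.get_eq_getElem, hget]
      exact wc _
    · intro i
      simp only [List.get_eq_getElem, hget, hlen, cmod]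
      exact mu1 _ _ rfl
    · intro m hm
      apply mu2
      rintro ⟨i, rfl⟩
      exact hm (List.mem_map.2 ⟨_, hmemC i, rfl⟩)
    · intro w hw
      apply nu2
      rintro i rfl
      exact hw (List.mem_map.2 ⟨_, hmemC _, rfl⟩)
  have hτμ : τ ≠ μ := by
    intro e
    have h0 := hel.next_ne 0 (by omega)
    rw [e, hget, hwife] at h0
    exact h0 rfl
  have : τ = μ' := by
    by_contra hne'
    exact hmin ⟨τ, hτ, ⟨dn, Ne.symm hne'⟩, ⟨up, hτμ⟩⟩
  exact ⟨ρ, this ▸ hel⟩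

/-- for any maximal chain `μ_0 < μ_1 < … < μ_k` of stable
matchings from the man-optimal to the woman-optimal stable matching, there is
a sequence of rotations `ρ_0, …, ρ_{k-1} ∈ Π`, unique up to cyclic shifts,
with `μ_{i+1}` the elimination of `ρ_i` from `μ_i`, and every rotation of `Π`
appears exactly once in the sequence (up to cyclic shift). -/
theorem maximal_chain_gives_all_rotations {M W : Type*} [Fintype M] [Fintype W]
    (mkt : Market M W) (k : ℕ) (μ : Fin (k + 1) → Matching M W)
    (hst : ∀ i, mkt.Stable (μ i))
    (hman : ∀ ν : Matching M W, mkt.Stable ν → mkt.Dom ν (μ 0))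
    (hwom : ∀ ν : Matching M W, mkt.Stable ν → mkt.Dom (μ (Fin.last k)) ν)
    (hcov : ∀ i : Fin k, mkt.Covers (μ i.succ) (μ i.castSucc)) :
    ∃ ρ : Fin k → List (W × M),
      (∀ i : Fin k, Matching.IsElimOf (μ i.succ) (μ i.castSucc) (ρ i)) ∧
      (∀ i : Fin k, mkt.InPi (ρ i)) ∧
      (∀ ρ' : Fin k → List (W × M),
        (∀ i : Fin k, Matching.IsElimOf (μ i.succ) (μ i.castSucc) (ρ' i)) →
        ∀ i : Fin k, (ρ' i).IsRotated (ρ i)) ∧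
      (∀ σ : List (W × M), mkt.InPi σ → ∃! i : Fin k, (ρ i).IsRotated σ) := by
  have hex : ∀ i : Fin k, ∃ ρ, Matching.IsElimOf (μ i.succ) (μ i.castSucc) ρ := fun i =>
    Market.cover_elim (hst _) (hst _) (hcov i)
  choose ρ hρ using hex
  refine ⟨ρ, hρ, fun i => ⟨μ i.castSucc, hst _, μ i.succ, hρ i, hst _, hcov i⟩,
    fun ρ' h i => (hρ i).isRotated (h i), ?_⟩
  rintro σ ⟨ν, hν, ν', hel, hν', hc⟩
  have hmono : ∀ w, Monotone (fun i => mkt.wRank w ((μ i).nu w)) := fun w =>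
    Fin.monotone_iff_le_succ.2 fun i => (hcov i).1.1 w
  have hex : ∃ i : Fin k, Matching.IsElimOf (μ i.succ) (μ i.castSucc) σ := by
    let P : Fin (k+1) → Prop := fun i => ∀ w, mkt.wRank w (ν'.nu w) ≤
      max (mkt.wRank w ((μ i).nu w)) (mkt.wRank w (ν.nu w))
    have hP0 : ¬ P 0 := by
      intro h
      apply hc.1.2
      apply mkt.eq_of_rank
      intro w
      have a := h w
      have b := hman ν hν w
      have d := hc.1.1 w
      omega
    have hPl : P (Fin.last k) := fun w => le_max_of_le_left (hwom ν' hν' w)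
    obtain ⟨i, hi1, hi2⟩ : ∃ i : Fin k, ¬ P i.castSucc ∧ P i.succ := by
      by_contra hno
      push Not at hno
      exact Fin.induction (motive := fun i => ¬ P i) hP0 hno (Fin.last k) hPl
    refine ⟨i, ?_⟩
    have e1 : ∀ w, min (max (mkt.wRank w ((μ i.castSucc).nu w)) (mkt.wRank w (ν.nu w)))
        (mkt.wRank w (ν'.nu w)) = mkt.wRank w (ν.nu w) := by
      rcases Market.med_cases (hst i.castSucc) hν hν' hc with h | h
      · exact h
      · exact absurd (fun w => min_eq_right_iff.1 (h w)) hi1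
    obtain ⟨w1, hw1⟩ : ∃ w, ν.nu w ≠ ν'.nu w := by
      by_contra hno
      push Not at hno
      exact hc.1.2 (Matching.eq_of_nu hno).symm
    have rne : ∀ w, ν.nu w ≠ ν'.nu w → mkt.wRank w (ν.nu w) ≠ mkt.wRank w (ν'.nu w) :=
      fun w h e => h (mkt.wRank_inj w e)
    have hd := hc.1.1
    have hd' := (hcov i).1.1
    have r1 := rne w1 hw1
    have a1 := e1 w1
    have b1 := hi2 w1
    have d1 := hd w1
    have g1 := hd' w1
    have c1 : ∀ w, min (max (mkt.wRank w (ν.nu w)) (mkt.wRank w ((μ i.castSucc).nu w)))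
        (mkt.wRank w ((μ i.succ).nu w)) = mkt.wRank w ((μ i.castSucc).nu w) := by
      rcases Market.med_cases hν (hst i.castSucc) (hst i.succ) (hcov i) with h | h
      · exact h
      · exfalso
        have := h w1
        omega
    have c2 : ∀ w, min (max (mkt.wRank w (ν'.nu w)) (mkt.wRank w ((μ i.castSucc).nu w)))
        (mkt.wRank w ((μ i.succ).nu w)) = mkt.wRank w ((μ i.succ).nu w) := by
      rcases Market.med_cases hν' (hst i.castSucc) (hst i.succ) (hcov i) with h | h
      · exfalso
        have := h w1
        omega
      · exact h
    refine hel.transfer (fun w h => ?_) (fun w h => ?_)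
    · have := rne w h
      have := e1 w
      have := hi2 w
      have := hd w
      have := hd' w
      have := c1 w
      have := c2 w
      exact ⟨mkt.wRank_inj w (by omega), mkt.wRank_inj w (by omega)⟩
    · have h := congrArg (mkt.wRank w) h
      have := c1 w
      have := c2 w
      rw [h] at *
      exact mkt.wRank_inj w (by omega)
  obtain ⟨i, hi⟩ := hex
  refine ⟨i, hi.isRotated (hρ i), ?_⟩
  intro j hj
  have noLt : ∀ a b : Fin k, (ρ a).IsRotated (ρ b) → ¬ a < b := by
    intro a b hab hlt
    have l := (hρ a).1
    have h0 : 0 < (ρ a).length := by omega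
    have hmem : (ρ a)[0] ∈ ρ b := hab.mem_iff.1 (List.getElem_mem h0)
    obtain ⟨t, ht, et⟩ := List.getElem_of_mem hmem
    have x1 : (μ a.castSucc).nu ((ρ a)[0]).1 = some ((ρ a)[0]).2 := (hρ a).2.2.2.1 ⟨0, h0⟩
    have x2 : (μ b.castSucc).nu ((ρ b)[t]).1 = some ((ρ b)[t]).2 := (hρ b).2.2.2.1 ⟨t, ht⟩
    rw [et] at x2
    have x3 := (hρ a).next_ne 0 h0
    rw [Ne, Matching.consistent] at x3
    have y1 : mkt.wRank ((ρ a)[0]).1 ((μ a.castSucc).nu ((ρ a)[0]).1) ≤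
      mkt.wRank ((ρ a)[0]).1 ((μ a.succ).nu ((ρ a)[0]).1) := (hcov a).1.1 _
    have y2 : mkt.wRank ((ρ a)[0]).1 ((μ a.succ).nu ((ρ a)[0]).1) ≤
      mkt.wRank ((ρ a)[0]).1 ((μ b.castSucc).nu ((ρ a)[0]).1) :=
      hmono _ (Fin.succ_le_castSucc_iff.2 hlt)
    rw [x1] at y1
    rw [x2] at y2
    exact x3 (mkt.wRank_inj _ (le_antisymm y2 y1))
  have hij : (ρ i).IsRotated (ρ j) := (hi.isRotated (hρ i)).trans hj.symm
  exact le_antisymm (not_lt.1 (noLt i j hij)) (not_lt.1 (noLt j i hij.symm))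
end

section
/- Let μ0 < μ1 < … < μk be a maximal chain of stable matchings from the man-optimal to the woman-optimal stable matching with corresponding rotation sequence ρ_0, …, ρ_{k-1} (μ_{i+1} is the elimination of ρ_i from μ_i). If ρ_i is a type 1 or type 2 predecessor of ρ_j, then i < j. In particular, the predecessor graph G(Π) is acyclic. -/
variable {M W : Type*}

namespace PCB

theorem nu_none_le {M W : Type*} {mkt : Market M W} {μ : Matching M W} (h : mkt.Stable μ) (w : W) :
    mkt.wRank w none ≤ mkt.wRank w (μ.nu w) := by
  rcases hw : μ.nu w with _ | m
  · exact le_rfl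
  · exact (h.1.2 w m hw).le

theorem mu_none_le {M W : Type*} {mkt : Market M W} {μ : Matching M W} (h : mkt.Stable μ) (m : M) :
    mkt.mRank m none ≤ mkt.mRank m (μ.mu m) := by
  rcases hw : μ.mu m with _ | w
  · exact le_rfl
  · exact (h.1.1 m w hw).le

/-- swap sides -/
def swapK {M W : Type*} (mkt : Market M W) : Market W M :=
  ⟨mkt.wRank, mkt.mRank, mkt.wRank_inj, mkt.mRank_inj⟩

def swapM {M W : Type*} (μ : Matching M W) : Matching W M :=
  ⟨μ.nu, μ.mu, fun w m => (μ.consistent m w).symm⟩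

theorem swap_stable {M W : Type*} {mkt : Market M W} {μ : Matching M W} (h : mkt.Stable μ) :
    (swapK mkt).Stable (swapM μ) := by
  refine ⟨⟨h.1.2, h.1.1⟩, fun w m hb => h.2 m w ⟨?_, hb.2.2, hb.2.1⟩⟩
  intro h'
  exact hb.1 ((μ.consistent m w).1 h')

/-- If w is matched to m in μ, and w strictly prefers this to ν, then m strictly prefers ν. -/
theorem L0 {M W : Type*} {mkt : Market M W} {μ ν : Matching M W} (hν : mkt.Stable ν)
    {m : M} {w : W} (h : μ.nu w = some m)
    (hlt : mkt.wRank w (ν.nu w) < mkt.wRank w (μ.nu w)) :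
    mkt.mRank m (μ.mu m) < mkt.mRank m (ν.mu m) := by
  have hm := (μ.consistent m w).2 h
  have hne : ν.mu m ≠ some w := by
    intro h'
    rw [(ν.consistent m w).1 h', h] at hlt
    exact lt_irrefl _ hlt
  by_contra hc
  rw [not_lt] at hc
  rcases lt_or_eq_of_le hc with hc | hc
  · exact hν.2 m w ⟨hne, hm ▸ hc, h ▸ hlt⟩
  · exact hne (hm ▸ mkt.mRank_inj m hc)

theorem exW {M W : Type*} {mkt : Market M W} {μ ν : Matching M W} (hν : mkt.Stable ν) {w : W}
    (hlt : mkt.wRank w (ν.nu w) < mkt.wRank w (μ.nu w)) : ∃ m, μ.nu w = some m := by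
  rcases h : μ.nu w with _ | m
  · rw [h] at hlt
    exact absurd (nu_none_le hν w) (by omega)
  · exact ⟨m, rfl⟩

theorem exM {M W : Type*} {mkt : Market M W} {μ ν : Matching M W} (hν : mkt.Stable ν) {m : M}
    (hlt : mkt.mRank m (ν.mu m) < mkt.mRank m (μ.mu m)) : ∃ w, μ.mu m = some w :=
  exW (swap_stable hν) (μ := swapM μ) hlt

theorem L1 {M W : Type*} [Finite M] {mkt : Market M W} {μ ν : Matching M W}
    (hμ : mkt.Stable μ) (hν : mkt.Stable ν) {m : M}
    (h : mkt.mRank m (μ.mu m) < mkt.mRank m (ν.mu m)) :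
    ∃ w, μ.mu m = some w ∧ mkt.wRank w (ν.nu w) < mkt.wRank w (μ.nu w) := by
  let A := {m // mkt.mRank m (μ.mu m) < mkt.mRank m (ν.mu m)}
  let B := {w // mkt.wRank w (ν.nu w) < mkt.wRank w (μ.nu w)}
  have hf : ∀ a : A, ∃ b : B, ν.mu a.1 = some b.1 := by
    rintro ⟨m, hm⟩
    obtain ⟨w, hw⟩ := exM hμ hm
    exact ⟨⟨w, L0 (swap_stable hμ) (μ := swapM ν) hw hm⟩, hw⟩
  have hg : ∀ b : B, ∃ a : A, μ.nu b.1 = some a.1 := by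
    rintro ⟨w, hw⟩
    obtain ⟨m, hm⟩ := exW hν hw
    exact ⟨⟨m, L0 hν hm hw⟩, hm⟩
  choose f hf using hf
  choose g hg using hg
  have hfi : Function.Injective f := by
    intro a b hab
    have h1 := (ν.consistent _ _).1 (hf a)
    have h2 := (ν.consistent _ _).1 (hf b)
    rw [hab, h2] at h1
    exact Subtype.ext (Option.some.inj h1).symm
  have hgi : Function.Injective g := by
    intro a b hab
    have h1 := (μ.consistent _ _).2 (hg a)
    have h2 := (μ.consistent _ _).2 (hg b)
    rw [hab, h2] at h1
    exact Subtype.ext (Option.some.inj h1).symm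
  have hs : Function.Surjective (g ∘ f) := Finite.surjective_of_injective (hgi.comp hfi)
  obtain ⟨a, ha⟩ := hs ⟨m, h⟩
  refine ⟨(f a).1, ?_, (f a).2⟩
  have := (μ.consistent _ _).2 (hg (f a))
  have h3 : (g (f a)).1 = m := congrArg Subtype.val ha
  rwa [h3] at this

theorem join_aux {M W : Type*} [Finite M] {mkt : Market M W} {μ ν : Matching M W}
    (hμ : mkt.Stable μ) (hν : mkt.Stable ν) :
    ∃ σ : Matching M W, mkt.Stable σ ∧
      (∀ w, mkt.wRank w (σ.nu w) = max (mkt.wRank w (μ.nu w)) (mkt.wRank w (ν.nu w))) ∧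
      (∀ m, mkt.mRank m (σ.mu m) = min (mkt.mRank m (μ.mu m)) (mkt.mRank m (ν.mu m))) := by
  classical
  let σ : Matching M W :=
    { mu := fun m => if mkt.mRank m (μ.mu m) ≤ mkt.mRank m (ν.mu m) then μ.mu m else ν.mu m
      nu := fun w => if mkt.wRank w (ν.nu w) ≤ mkt.wRank w (μ.nu w) then μ.nu w else ν.nu w
      consistent := by
        intro m w
        constructor
        · intro h
          split_ifs at h with hc
          · rcases lt_or_eq_of_le hc with hc | hc
            · obtain ⟨w', hw', hlt⟩ := L1 hμ hν hc
              rw [hw'] at h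
              obtain rfl := Option.some.inj h
              rw [if_pos hlt.le]
              exact (μ.consistent _ _).1 hw'
            · have h2 := mkt.mRank_inj m hc
              have h3 := (μ.consistent _ _).1 h
              rw [h2] at h
              have h4 := (ν.consistent _ _).1 h
              rw [h3, h4, ite_self]
          · rw [not_le] at hc
            obtain ⟨w', hw', hlt⟩ := L1 hν hμ hc
            rw [hw'] at h
            obtain rfl := Option.some.inj h
            rw [if_neg (not_le.2 hlt)]
            exact (ν.consistent _ _).1 hw'
        · intro h
          split_ifs at h with hc
          · rcases lt_or_eq_of_le hc with hc | hc
            · have := L0 hν h hc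
              rw [if_pos this.le]
              exact (μ.consistent _ _).2 h
            · have h2 := mkt.wRank_inj w hc
              have h3 := (μ.consistent _ _).2 h
              rw [← h2] at h
              have h4 := (ν.consistent _ _).2 h
              rw [h3, h4, ite_self]
          · rw [not_le] at hc
            have := L0 hμ h hc
            rw [if_neg (not_le.2 this)]
            exact (ν.consistent _ _).2 h }
  have hw : ∀ w, mkt.wRank w (σ.nu w) = max (mkt.wRank w (μ.nu w)) (mkt.wRank w (ν.nu w)) := by
    intro w
    simp only [σ]
    split_ifs with hc
    · exact (max_eq_left hc).symm
    · exact (max_eq_right (not_le.1 hc).le).symm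
  have hm : ∀ m, mkt.mRank m (σ.mu m) = min (mkt.mRank m (μ.mu m)) (mkt.mRank m (ν.mu m)) := by
    intro m
    simp only [σ]
    split_ifs with hc
    · exact (min_eq_left hc).symm
    · exact (min_eq_right (not_le.1 hc).le).symm
  refine ⟨σ, ⟨⟨?_, ?_⟩, ?_⟩, hw, hm⟩
  · intro m w h
    simp only [σ] at h
    split_ifs at h
    · exact hμ.1.1 m w h
    · exact hν.1.1 m w h
  · intro w m h
    simp only [σ] at h
    split_ifs at h
    · exact hμ.1.2 w m h
    · exact hν.1.2 w m h
  · rintro m w ⟨-, h1, h2⟩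
    rw [hm] at h1
    rw [hw] at h2
    have h3 := (max_lt_iff.1 h2)
    rcases min_lt_iff.1 h1 with h1 | h1
    · exact hμ.2 m w ⟨fun h => by rw [h] at h1; exact lt_irrefl _ h1, h1, h3.1⟩
    · exact hν.2 m w ⟨fun h => by rw [h] at h1; exact lt_irrefl _ h1, h1, h3.2⟩

theorem meet_aux {M W : Type*} [Finite W] {mkt : Market M W} {μ ν : Matching M W}
    (hμ : mkt.Stable μ) (hν : mkt.Stable ν) :
    ∃ σ : Matching M W, mkt.Stable σ ∧
      (∀ w, mkt.wRank w (σ.nu w) = min (mkt.wRank w (μ.nu w)) (mkt.wRank w (ν.nu w))) := by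
  obtain ⟨σ, h1, -, h3⟩ := join_aux (swap_stable hμ) (swap_stable hν)
  exact ⟨swapM σ, swap_stable h1, h3⟩

theorem matching_ext {M W : Type*} {μ ν : Matching M W} (h : ∀ w, μ.nu w = ν.nu w) : μ = ν := by
  have hn : μ.nu = ν.nu := funext h
  have hm : μ.mu = ν.mu := by
    funext m
    apply Option.ext
    intro w
    exact (μ.consistent m w).trans ((by rw [hn]) : _ ↔ _) |>.trans (ν.consistent m w).symm
  cases μ; cases ν; cases hn; cases hm; rfl

/-- median -/
theorem med {M W : Type*} [Finite M] [Finite W] {mkt : Market M W} {μ μ' ν : Matching M W}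
    (hμ : mkt.Stable μ) (hμ' : mkt.Stable μ') (hν : mkt.Stable ν) (hc : mkt.Covers μ' μ) :
    (∀ w, min (max (mkt.wRank w (μ.nu w)) (mkt.wRank w (ν.nu w))) (mkt.wRank w (μ'.nu w))
      = mkt.wRank w (μ.nu w)) ∨
    (∀ w, min (max (mkt.wRank w (μ.nu w)) (mkt.wRank w (ν.nu w))) (mkt.wRank w (μ'.nu w))
      = mkt.wRank w (μ'.nu w)) := by
  obtain ⟨α, ha, haw, -⟩ := join_aux hμ hν
  obtain ⟨β, hb, hbw⟩ := meet_aux ha hμ'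
  simp only [haw] at hbw
  simp only [← hbw]
  by_contra hcon
  rw [not_or] at hcon
  have hd := hc.1.1
  refine hc.2 ⟨β, hb, ⟨?_, ?_⟩, ⟨?_, ?_⟩⟩
  · intro w
    rw [hbw]
    exact min_le_right _ _
  · rintro rfl
    exact hcon.2 fun w => rfl
  · intro w
    rw [hbw]
    exact le_min (le_max_left _ _) (hd w)
  · rintro rfl
    exact hcon.1 fun w => rfl

theorem no_between {M W : Type*} [Finite M] [Finite W] {mkt : Market M W} {μ μ' ν : Matching M W}
    (hμ : mkt.Stable μ) (hμ' : mkt.Stable μ') (hν : mkt.Stable ν) (hc : mkt.Covers μ' μ) (w : W)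
    (h1 : mkt.wRank w (μ.nu w) < mkt.wRank w (ν.nu w))
    (h2 : mkt.wRank w (ν.nu w) < mkt.wRank w (μ'.nu w)) : False := by
  rcases med hμ hμ' hν hc with h | h
  · have := h w; omega
  · have := h w; omega

/-- In a covering step, no pair `(m,w)` is jumped over on both sides. -/
theorem no_skip {M W : Type*} [Finite M] [Finite W] {mkt : Market M W} {μ μ' : Matching M W}
    (hμ : mkt.Stable μ) (hμ' : mkt.Stable μ') (hc : mkt.Covers μ' μ)
    {m₀ : M} {w₀ : W}
    (h1 : mkt.wRank w₀ (μ.nu w₀) < mkt.wRank w₀ (some m₀))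
    (h2 : mkt.mRank m₀ (μ'.mu m₀) < mkt.mRank m₀ (some w₀))
    (h3 : mkt.mRank m₀ (some w₀) < mkt.mRank m₀ (μ.mu m₀)) : False := by
  classical
  have hd := hc.1.1
  -- men who change
  let D : M → Prop := fun m => mkt.mRank m (μ'.mu m) < mkt.mRank m (μ.mu m)
  have hstep : ∀ m, D m → ∃ w, mkt.mRank m (some w) < mkt.mRank m (μ.mu m) ∧
      mkt.wRank w (μ.nu w) < mkt.wRank w (some m) ∧
      (∀ w', mkt.mRank m (some w') < mkt.mRank m (μ.mu m) →
        mkt.wRank w' (μ.nu w') < mkt.wRank w' (some m) →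
        mkt.mRank m (some w') ≤ mkt.mRank m (some w)) := by
    intro m hm
    obtain ⟨w, hw, hlt⟩ := L1 hμ' hμ hm
    let S : Set W := {w | mkt.mRank m (some w) < mkt.mRank m (μ.mu m) ∧
      mkt.wRank w (μ.nu w) < mkt.wRank w (some m)}
    have hS : S.Nonempty := by
      refine ⟨w, ?_, ?_⟩
      · rw [← hw]; exact hm
      · rw [← (μ'.consistent _ _).1 hw]; exact hlt
    obtain ⟨s, hs, hmax⟩ := Set.exists_max_image S (fun w => mkt.mRank m (some w))
      (Set.toFinite S) hS
    exact ⟨s, hs.1, hs.2, fun w' ha hb => hmax w' ⟨ha, hb⟩⟩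
  -- properties of the next woman
  have hstep2 : ∀ m, D m → ∃ w x, mkt.mRank m (some w) < mkt.mRank m (μ.mu m) ∧
      mkt.wRank w (μ.nu w) < mkt.wRank w (some m) ∧
      (∀ w', mkt.mRank m (some w') < mkt.mRank m (μ.mu m) →
        mkt.wRank w' (μ.nu w') < mkt.wRank w' (some m) →
        mkt.mRank m (some w') ≤ mkt.mRank m (some w)) ∧
      mkt.mRank m (μ'.mu m) ≤ mkt.mRank m (some w) ∧
      mkt.wRank w (some m) ≤ mkt.wRank w (μ'.nu w) ∧ μ.mu x = some w ∧ D x := by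
    intro m hm
    obtain ⟨w, ha, hb, hmax⟩ := hstep m hm
    obtain ⟨w1, hw1, hlt⟩ := L1 hμ' hμ hm
    have hw1' := (μ'.consistent _ _).1 hw1
    have hge : mkt.mRank m (μ'.mu m) ≤ mkt.mRank m (some w) := by
      rw [hw1]
      exact hmax w1 (hw1 ▸ hm) (hw1' ▸ hlt)
    have hwm : mkt.wRank w (some m) ≤ mkt.wRank w (μ'.nu w) := by
      by_cases he : μ'.mu m = some w
      · rw [(μ'.consistent _ _).1 he]
      · by_contra hcon
        refine hμ'.2 m w ⟨he, lt_of_le_of_ne hge ?_, not_le.1 hcon⟩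
        intro h
        exact he (mkt.mRank_inj m h)
    have hch : mkt.wRank w (μ.nu w) < mkt.wRank w (μ'.nu w) := lt_of_lt_of_le hb hwm
    obtain ⟨x, hx, hx2⟩ := L1 (swap_stable hμ) (swap_stable hμ') (m := w) hch
    exact ⟨w, x, ha, hb, hmax, hge, hwm, (μ.consistent _ _).2 hx, hx2⟩
  haveI : Nonempty W := ⟨w₀⟩
  haveI : Nonempty M := ⟨m₀⟩
  choose! s g hs1 hs2 hs3 hs4 hs5 hs6 hs7 using hstep2
  let P : Set M := {m | D m ∧ m ∈ Function.periodicPts g}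
  have hD0 : D m₀ := h2.trans h3
  have hiter : ∀ n, D (g^[n] m₀) := by
    intro n
    induction n with
    | zero => exact hD0
    | succ n ih => rw [Function.iterate_succ_apply']; exact hs7 _ ih
  obtain ⟨p, hp⟩ : ∃ p, p ∈ P := by
    obtain ⟨a, b, hab, he⟩ := Finite.exists_ne_map_eq_of_infinite (fun n : ℕ => g^[n] m₀)
    wlog hlt : a < b generalizing a b
    · exact this b a hab.symm he.symm (by omega)
    refine ⟨g^[a] m₀, hiter a, b - a, by omega, ?_⟩
    change g^[b-a] (g^[a] m₀) = g^[a] m₀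
    rw [← Function.iterate_add_apply, Nat.sub_add_cancel hlt.le]
    exact he.symm
  have hPg : ∀ m ∈ P, g m ∈ P := fun m hm =>
    ⟨hs7 m hm.1, (Function.bijOn_periodicPts g).mapsTo hm.2⟩
  let t : M → M := fun m => if m ∈ P then g m else m
  have ht1 : ∀ m ∈ P, t m = g m := fun m hm => if_pos hm
  have ht2 : ∀ m, m ∉ P → t m = m := fun m hm => if_neg hm
  have hti : Function.Injective t := by
    intro a b hab
    by_cases ha : a ∈ P <;> by_cases hb : b ∈ P
    · rw [ht1 a ha, ht1 b hb] at hab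
      exact (Function.bijOn_periodicPts g).injOn ha.2 hb.2 hab
    · rw [ht1 a ha, ht2 b hb] at hab
      exact absurd (hab ▸ hPg a ha) hb
    · rw [ht2 a ha, ht1 b hb] at hab
      exact absurd (hab ▸ hPg b hb) ha
    · rwa [ht2 a ha, ht2 b hb] at hab
  let τ : Equiv.Perm M := Equiv.ofBijective t (Finite.injective_iff_bijective.1 hti)
  have hτ : ∀ m, τ m = t m := fun m => rfl
  let σ : Matching M W :=
    { mu := fun m => μ.mu (τ m)
      nu := fun w => (μ.nu w).map τ.symm
      consistent := by
        intro m w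
        rw [μ.consistent, Option.map_eq_some_iff]
        constructor
        · intro h
          exact ⟨_, h, by simp⟩
        · rintro ⟨a, ha, rfl⟩
          simpa using ha }
  have hσ1 : ∀ m ∈ P, σ.mu m = some (s m) := by
    intro m hm
    change μ.mu (t m) = _
    rw [ht1 m hm, hs6 m hm.1]
  have hσ2 : ∀ m, m ∉ P → σ.mu m = μ.mu m := by
    intro m hm
    change μ.mu (t m) = _
    rw [ht2 m hm]
  -- women weakly improve, but not beyond μ'
  have hσw : ∀ w, mkt.wRank w (μ.nu w) ≤ mkt.wRank w (σ.nu w) ∧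
      mkt.wRank w (σ.nu w) ≤ mkt.wRank w (μ'.nu w) := by
    intro w
    rcases hw : μ.nu w with _ | x
    · have : σ.nu w = none := by
        change (μ.nu w).map τ.symm = none
        rw [hw]; rfl
      rw [this, ← hw]
      exact ⟨le_rfl, hd w⟩
    · have hσx : σ.nu w = some (τ.symm x) := by
        change (μ.nu w).map τ.symm = _
        rw [hw]; rfl
      have hm := (σ.consistent _ _).2 hσx
      by_cases hP : τ.symm x ∈ P
      · rw [hσ1 _ hP] at hm
        have hm := Option.some.inj hm
        have e1 := hs2 _ hP.1
        have e2 := hs5 _ hP.1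
        rw [hm] at e1 e2
        rw [hσx, ← hw]
        exact ⟨e1.le, e2⟩
      · rw [hσ2 _ hP] at hm
        rw [hσx, ← hw, (μ.consistent _ _).1 hm]
        refine ⟨le_rfl, ?_⟩
        rw [← (μ.consistent _ _).1 hm]
        exact hd w
  have hσst : mkt.Stable σ := by
    refine ⟨⟨?_, ?_⟩, ?_⟩
    · intro m w h
      by_cases hP : m ∈ P
      · have h' := hσ1 m hP
        rw [h] at h'
        rw [h']
        obtain ⟨w1, hw1, -⟩ := L1 hμ' hμ hP.1
        have e1 := hs4 m hP.1
        have e2 := hμ'.1.1 m w1 hw1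
        rw [hw1] at e1
        omega
      · rw [hσ2 m hP] at h
        exact hμ.1.1 m w h
    · intro w m h
      have e1 := (hσw w).1
      have e2 := nu_none_le hμ w
      rw [h] at e1
      refine lt_of_le_of_ne (e2.trans e1) ?_
      intro he
      exact absurd (mkt.wRank_inj w he) (by simp)
    · rintro m w ⟨-, hb1, hb2⟩
      have hb3 : mkt.wRank w (μ.nu w) < mkt.wRank w (some m) := lt_of_le_of_lt (hσw w).1 hb2
      have hne : μ.mu m ≠ some w := by
        intro h
        rw [(μ.consistent _ _).1 h] at hb3
        exact lt_irrefl _ hb3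
      by_cases hP : m ∈ P
      · rw [hσ1 m hP] at hb1
        rcases lt_trichotomy (mkt.mRank m (some w)) (mkt.mRank m (μ.mu m)) with h | h | h
        · exact absurd (hs3 m hP.1 w h hb3) (not_le.2 hb1)
        · exact hne (mkt.mRank_inj m h).symm
        · exact hμ.2 m w ⟨hne, h, hb3⟩
      · rw [hσ2 m hP] at hb1
        exact hμ.2 m w ⟨hne, hb1, hb3⟩
  have hne1 : σ ≠ μ := by
    intro h
    have e1 := hσ1 p hp
    have e2 := hs1 p hp.1
    rw [h] at e1
    rw [e1] at e2
    exact lt_irrefl _ e2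
  have hne2 : μ' ≠ σ := by
    intro h
    by_cases hP : m₀ ∈ P
    · have e1 := hσ1 _ hP
      have e2 := hs3 m₀ hD0 w₀ h3 h1
      rw [← h] at e1
      rw [e1] at h2
      omega
    · have e1 := hσ2 _ hP
      rw [← h] at e1
      rw [e1] at h2
      omega
  exact hc.2 ⟨σ, hσst, ⟨fun w => (hσw w).2, hne2⟩, ⟨fun w => (hσw w).1, hne1⟩⟩

def Jump {M W : Type*} (μ μ' : Matching M W) (ρ : List (W × M)) : Prop :=
  2 ≤ ρ.length ∧ (ρ.map Prod.fst).Nodup ∧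
  (∀ i : Fin ρ.length, μ.nu (ρ.get i).1 = some (ρ.get i).2) ∧
  (∀ i : Fin ρ.length, μ'.mu (ρ.get i).2 = some (ρ.get (RotNext ρ i)).1)

theorem next_prev {M W : Type*} (ρ : List (W × M)) (i : Fin ρ.length) :
    RotNext ρ (RotPrev ρ i) = i := by
  have hi := i.isLt
  apply Fin.ext
  simp only [RotNext, RotPrev]
  rw [Nat.mod_add_mod, Nat.sub_add_cancel (by omega), Nat.add_mod_right, Nat.mod_eq_of_lt hi]

theorem next_ne {M W : Type*} (ρ : List (W × M)) (h : 2 ≤ ρ.length) (i : Fin ρ.length) :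
    RotNext ρ i ≠ i := by
  have hi := i.isLt
  intro h'
  have h' := congrArg Fin.val h'
  simp only [RotNext] at h'
  by_cases hc : i.1 + 1 < ρ.length
  · rw [Nat.mod_eq_of_lt hc] at h'
    omega
  · have : i.1 + 1 = ρ.length := by omega
    rw [this, Nat.mod_self] at h'
    omega

theorem fst_inj {M W : Type*} {ρ : List (W × M)} (h : (ρ.map Prod.fst).Nodup) {i j : Fin ρ.length}
    (he : (ρ.get i).1 = (ρ.get j).1) : i = j := by
  have hi := i.isLt
  have hj := j.isLt
  apply Fin.ext
  refine (List.Nodup.getElem_inj_iff h (hi := by simp) (hj := by simp)).1 ?_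
  simpa using he

theorem chain_step {k : ℕ} (P : Fin (k + 1) → Prop) (h0 : P 0) (hl : ¬ P (Fin.last k)) :
    ∃ j : Fin k, P j.castSucc ∧ ¬ P j.succ := by
  by_contra hcon
  push Not at hcon
  exact hl (Fin.induction (motive := P) h0 (fun i hi => hcon i hi) (Fin.last k))

end PCB

open PCB

/-- along a maximal chain of stable matchings from the
man-optimal to the woman-optimal matching with rotation sequence
`ρ_0, …, ρ_{k-1}`, if `ρ_i` is a (type 1 or type 2) predecessor of `ρ_j`
then `i < j`; in particular the predecessor graph `G(Π)` is acyclic. -/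
theorem predecessors_come_before {M W : Type*} [Fintype M] [Fintype W]
    (mkt : Market M W) (k : ℕ) (μ : Fin (k + 1) → Matching M W)
    (hst : ∀ i, mkt.Stable (μ i))
    (hman : ∀ ν : Matching M W, mkt.Stable ν → mkt.Dom ν (μ 0))
    (hwom : ∀ ν : Matching M W, mkt.Stable ν → mkt.Dom (μ (Fin.last k)) ν)
    (hcov : ∀ i : Fin k, mkt.Covers (μ i.succ) (μ i.castSucc))
    (ρ : Fin k → List (W × M))
    (hρ : ∀ i : Fin k, Matching.IsElimOf (μ i.succ) (μ i.castSucc) (ρ i)) :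
    (∀ i j : Fin k, mkt.Pred (ρ i) (ρ j) → i < j) ∧
    ¬ ∃ (n : ℕ) (c : Fin (n + 1) → List (W × M)),
        (∀ i, mkt.InPi (c i)) ∧
        (∀ i : Fin n, mkt.Pred (c i.castSucc) (c i.succ)) ∧
        mkt.Pred (c (Fin.last n)) (c 0) := by
  have hmono : Monotone (fun i => fun w => mkt.wRank w ((μ i).nu w)) := by
    apply Fin.monotone_iff_le_succ.2
    intro i w
    exact (hcov i).1.1 w
  have key : ∀ (i j : Fin k) (r1 r2 : List (W × M)), Jump (μ i.castSucc) (μ i.succ) r1 →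
      Jump (μ j.castSucc) (μ j.succ) r2 → mkt.Pred r1 r2 → i < j := by
    rintro i j r1 r2 ⟨a1, a2, a3, a4⟩ ⟨b1, b2, b3, b4⟩ hP
    by_contra hcon
    rw [not_lt] at hcon
    rcases hP with ⟨w, m, ⟨w0, x, rfl, rfl, hx⟩, hmem⟩ | ⟨m, w, mlo, mhi, whi, wlo, ⟨x, rfl, rfl, rfl⟩, hlo, hhi, ⟨y, rfl, rfl, rfl⟩, hlo2, hhi2⟩
    · obtain ⟨y, hy⟩ := List.get_of_mem hmem
      have e1 := b3 y
      rw [hy] at e1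
      have e2 := a4 x
      rw [hx] at e2
      have e2 := (Matching.consistent _ _ _).1 e2
      have e3 := hmono (Fin.castSucc_le_castSucc_iff.2 hcon) w
      have e4 := hmono (Fin.castSucc_le_succ i) w
      simp only at e1 e2 e3 e4
      rw [e1] at e3
      rw [e2] at e4
      have e5 := mkt.wRank_inj w (le_antisymm e3 e4)
      have e6 := (Matching.consistent _ _ _).2 e5.symm
      have e7 := (Matching.consistent _ _ _).2 (a3 x)
      rw [e6] at e7
      have e8 := Option.some.inj e7
      rw [← hx] at e8
      exact next_ne r1 a1 x (fst_inj a2 e8)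
    · have e1 := b4 y
      have e2 := (Matching.consistent _ _ _).2 (b3 y)
      have e3 := a3 x
      rw [← e1] at hlo2
      rw [← e2] at hhi2
      rw [← e3] at hlo
      rcases lt_or_eq_of_le hcon with hlt | rfl
      · have e4 := hmono (show j.succ ≤ i.castSucc from by
          rw [Fin.le_def]; simpa using hlt) (r1.get x).1
        simp only at e4
        refine (hst j.succ).2 _ _ ⟨?_, hlo2, lt_of_le_of_lt e4 hlo⟩
        intro h
        rw [h] at hlo2
        exact lt_irrefl _ hlo2
      · exact no_skip (hst _) (hst _) (hcov j) hlo hlo2 hhi2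
  have hJ : ∀ i, Jump (μ i.castSucc) (μ i.succ) (ρ i) := fun i =>
    ⟨(hρ i).1, (hρ i).2.1, (hρ i).2.2.2.1, (hρ i).2.2.2.2.1⟩
  refine ⟨fun i j h => key i j _ _ (hJ i) (hJ j) h, ?_⟩
  have hPi : ∀ r, mkt.InPi r → ∃ j : Fin k, Jump (μ j.castSucc) (μ j.succ) r := by
    rintro r ⟨ν, hν, ν', ⟨c1, c2, c3, c4, c5, c6, c7⟩, hν', hc⟩
    have hd := hc.1.1
    obtain ⟨j, hj1, hj2⟩ := chain_step (fun i : Fin (k+1) => ∀ w,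
      min (max (mkt.wRank w (ν.nu w)) (mkt.wRank w ((μ i).nu w))) (mkt.wRank w (ν'.nu w))
      = mkt.wRank w (ν.nu w)) (fun w => by
        have e1 := hman ν hν w
        have e2 := hd w
        omega) (by
        intro h
        apply hc.1.2
        apply matching_ext
        intro w
        apply mkt.wRank_inj w
        have e1 := h w
        have e2 := hd w
        have e3 := hwom ν' hν' w
        omega)
    have hj2 := (med hν hν' (hst j.succ) hc).resolve_left hj2
    have hw : ∀ w, mkt.wRank w (ν.nu w) < mkt.wRank w (ν'.nu w) →
        (μ j.castSucc).nu w = ν.nu w ∧ (μ j.succ).nu w = ν'.nu w := by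
      intro w hlt
      have e1 := hj1 w
      have e2 := hj2 w
      have n1 := no_between (hst _) (hst _) hν (hcov j) w
      have n2 := no_between (hst _) (hst _) hν' (hcov j) w
      constructor
      · apply mkt.wRank_inj w
        by_contra hne
        exact n1 (by omega) (by omega)
      · apply mkt.wRank_inj w
        by_contra hne
        exact n2 (by omega) (by omega)
    have hlt : ∀ i : Fin r.length,
        mkt.wRank (r.get i).1 (ν.nu (r.get i).1) < mkt.wRank (r.get i).1 (ν'.nu (r.get i).1) := by
      intro i
      refine lt_of_le_of_ne (hd _) ?_
      intro h
      have h := mkt.wRank_inj _ h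
      rw [c4 i] at h
      have h1 := (Matching.consistent _ _ _).2 h.symm
      rw [c5 i] at h1
      exact next_ne r c1 i (fst_inj c2 (Option.some.inj h1))
    refine ⟨j, c1, c2, fun i => ?_, fun i => ?_⟩
    · rw [(hw _ (hlt i)).1, c4 i]
    · rw [Matching.consistent, (hw _ (hlt (RotNext r i))).2, ← Matching.consistent]
      exact c5 i
  rintro ⟨n, c, hin, hpred, hlast⟩
  choose f hf using fun i => hPi (c i) (hin i)
  have hle : f 0 ≤ f (Fin.last n) := by
    have : ∀ i, f 0 ≤ f i := by
      intro i
      induction i using Fin.induction with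
      | zero => exact le_rfl
      | succ i ih => exact ih.trans (key _ _ _ _ (hf _) (hf _) (hpred i)).le
    exact this _
  exact absurd (key _ _ _ _ (hf _) (hf _) hlast) (not_lt.2 hle)
end

section
/- Interchange lemma: let μ0 < μ1 < μ2 be stable matchings where μ1 covers μ0 and μ2 covers μ1, with rotations ρ0, ρ1 such that μ1 is the elimination of ρ0 from μ0 and μ2 is the elimination of ρ1 from μ1. If ρ0 is not a (type 1 or type 2) predecessor of ρ1, then ρ1 is exposed in μ0; moreover, letting μ1' be the elimination of ρ1 from μ0, the rotation ρ0 is exposed in μ1' and μ2 is the elimination of ρ0 from μ1'. -/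
variable {M W : Type*}

theorem rotNext_rotPrev (ρ : List (W × M)) (i : Fin ρ.length) :
    RotNext ρ (RotPrev ρ i) = i := by
  have hi := i.2
  apply Fin.ext
  simp only [RotNext, RotPrev, Nat.mod_add_mod]
  have : i.1 + ρ.length - 1 + 1 = i.1 + ρ.length := by omega
  rw [this, Nat.add_mod_right, Nat.mod_eq_of_lt hi]

theorem elim_man {μ' μ : Matching M W} {ρ : List (W × M)} (h : Matching.IsElimOf μ' μ ρ)
    {m : M} (hm : m ∈ ρ.map Prod.snd) :
    ∃ w w', MovesManFromTo ρ m w w' ∧ (w, m) ∈ ρ ∧ w ∈ ρ.map Prod.fst ∧ w' ∈ ρ.map Prod.fst ∧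
      μ.mu m = some w ∧ μ'.mu m = some w' := by
  obtain ⟨_, _, _, h4, h5, _, _⟩ := h
  obtain ⟨p, hp, rfl⟩ := List.mem_map.1 hm
  obtain ⟨i, rfl⟩ := List.get_of_mem hp
  exact ⟨(ρ.get i).1, (ρ.get (RotNext ρ i)).1, ⟨i, rfl, rfl, rfl⟩, hp,
    List.mem_map_of_mem hp, List.mem_map_of_mem (List.get_mem _ _),
    (μ.consistent _ _).2 (h4 i), h5 i⟩

theorem elim_woman {μ' μ : Matching M W} {ρ : List (W × M)} (h : Matching.IsElimOf μ' μ ρ)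
    {w : W} (hw : w ∈ ρ.map Prod.fst) :
    ∃ m m', MovesWomanFromTo ρ w m m' ∧ (w, m) ∈ ρ ∧ m ∈ ρ.map Prod.snd ∧ m' ∈ ρ.map Prod.snd ∧
      μ.nu w = some m ∧ μ'.nu w = some m' := by
  obtain ⟨_, _, _, h4, h5, _, _⟩ := h
  obtain ⟨p, hp, rfl⟩ := List.mem_map.1 hw
  obtain ⟨i, rfl⟩ := List.get_of_mem hp
  refine ⟨(ρ.get i).2, (ρ.get (RotPrev ρ i)).2, ⟨i, rfl, rfl, rfl⟩, hp,
    List.mem_map_of_mem hp, List.mem_map_of_mem (List.get_mem _ _),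
    h4 i, (μ'.consistent _ _).1 ?_⟩
  have := h5 (RotPrev ρ i)
  change _ = some (ρ.get (RotNext ρ (RotPrev ρ i))).1 at this
  rwa [rotNext_rotPrev] at this

theorem matching_ext {μ μ' : Matching M W} (h : ∀ w, μ.nu w = μ'.nu w) : μ = μ' := by
  have hn : μ.nu = μ'.nu := funext h
  have hm : μ.mu = μ'.mu := by
    funext m
    apply Option.ext
    intro w
    rw [μ.consistent, μ'.consistent, hn]
  cases μ; cases μ'; simp_all

theorem matching_ext' {μ μ' : Matching M W} (h : ∀ m, μ.mu m = μ'.mu m) : μ = μ' := by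
  apply matching_ext
  intro w
  apply Option.ext
  intro m
  rw [← μ.consistent, ← μ'.consistent, h]

theorem men_reverse (mkt : Market M W) {μ' μ : Matching M W} (h : mkt.Stable μ)
    (h' : mkt.Stable μ') (hd : mkt.Dom μ' μ) (m : M) :
    mkt.mRank m (μ'.mu m) ≤ mkt.mRank m (μ.mu m) := by
  by_contra hlt
  push Not at hlt
  cases hq : μ'.mu m with
  | none =>
    rw [hq] at hlt
    cases hp : μ.mu m with
    | none => rw [hp] at hlt; omega
    | some w => have := h.1.1 m w hp; rw [hp] at hlt; omega
  | some w =>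
    have hne : μ.mu m ≠ some w := by intro e; rw [e, hq] at hlt; omega
    have hw := (μ'.consistent m w).1 hq
    have hd' := hd w
    rw [hw] at hd'
    refine h.2 m w ⟨hne, hq ▸ hlt, lt_of_le_of_ne hd' ?_⟩
    intro e
    exact hne ((μ.consistent m w).2 (mkt.wRank_inj w e))

open Classical in
theorem patch_exists (P : M → Prop) (Q : W → Prop) (α β : Matching M W)
    (ha : ∀ m w, α.mu m = some w → (P m ↔ Q w))
    (hb : ∀ m w, β.mu m = some w → (P m ↔ Q w)) :
    ∃ τ : Matching M W, (∀ m, P m → τ.mu m = α.mu m) ∧ (∀ m, ¬ P m → τ.mu m = β.mu m) ∧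
      (∀ w, Q w → τ.nu w = α.nu w) ∧ (∀ w, ¬ Q w → τ.nu w = β.nu w) := by
  refine ⟨⟨fun m => if P m then α.mu m else β.mu m, fun w => if Q w then α.nu w else β.nu w, ?_⟩,
    ?_, ?_, ?_, ?_⟩
  · intro m w
    have h1 := ha m w
    have h2 := hb m w
    have h3 := α.consistent m w
    have h4 := β.consistent m w
    by_cases hP : P m <;> by_cases hQ : Q w <;> simp only [hP, hQ, if_true, if_false] <;> grind
  all_goals intro x hx; simp [hx]

/-- IR of a patch. -/
theorem patch_stable (mkt : Market M W) {P : M → Prop} {Q : W → Prop} {α β τ : Matching M W}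
    (ha : mkt.Stable α) (hb : mkt.Stable β)
    (h1 : ∀ m, P m → τ.mu m = α.mu m) (h2 : ∀ m, ¬ P m → τ.mu m = β.mu m)
    (h3 : ∀ w, Q w → τ.nu w = α.nu w) (h4 : ∀ w, ¬ Q w → τ.nu w = β.nu w)
    (h5 : ∀ m w, P m → ¬ Q w → ¬ mkt.Blocking τ m w)
    (h6 : ∀ m w, ¬ P m → Q w → ¬ mkt.Blocking τ m w) : mkt.Stable τ := by
  refine ⟨⟨?_, ?_⟩, ?_⟩
  · intro m w h
    by_cases hP : P m
    · exact ha.1.1 m w (h1 m hP ▸ h)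
    · exact hb.1.1 m w (h2 m hP ▸ h)
  · intro w m h
    by_cases hP : Q w
    · exact ha.1.2 w m (h3 w hP ▸ h)
    · exact hb.1.2 w m (h4 w hP ▸ h)
  · intro m w hB
    by_cases hP : P m <;> by_cases hQ : Q w
    · refine ha.2 m w ?_
      unfold Market.Blocking at hB ⊢
      rwa [h1 m hP, h3 w hQ] at hB
    · exact h5 m w hP hQ hB
    · exact h6 m w hP hQ hB
    · refine hb.2 m w ?_
      unfold Market.Blocking at hB ⊢
      rwa [h2 m hP, h4 w hQ] at hB

/-- To refute blocking it suffices to weakly dominate a stable matching's non-blocking. -/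
theorem not_blocking_of (mkt : Market M W) {σ τ : Matching M W} (hs : mkt.Stable σ) {m : M} {w : W}
    (hm : mkt.mRank m (σ.mu m) ≤ mkt.mRank m (τ.mu m))
    (hw : mkt.wRank w (σ.nu w) ≤ mkt.wRank w (τ.nu w)) : ¬ mkt.Blocking τ m w := by
  rintro ⟨_, h2, h3⟩
  refine hs.2 m w ⟨?_, by omega, by omega⟩
  intro e
  rw [e] at hm
  omega

/-- interchange lemma: let `μ0 < μ1 < μ2` be stable matchings
with `μ1` covering `μ0` and `μ2` covering `μ1`, with rotations `ρ0, ρ1`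
(`μ1` the elimination of `ρ0` from `μ0`, `μ2` of `ρ1` from `μ1`). If `ρ0` is
not a predecessor of `ρ1`, then `ρ1` is exposed in `μ0`; moreover, for `μ1'`
the elimination of `ρ1` from `μ0`, the rotation `ρ0` is exposed in `μ1'` and
`μ2` is the elimination of `ρ0` from `μ1'`. -/
theorem interchange_lemma {M W : Type*} [Fintype M] [Fintype W]
    (mkt : Market M W) (μ0 μ1 μ2 : Matching M W)
    (h0 : mkt.Stable μ0) (h1 : mkt.Stable μ1) (h2 : mkt.Stable μ2)
    (hc1 : mkt.Covers μ1 μ0) (hc2 : mkt.Covers μ2 μ1)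
    (ρ0 ρ1 : List (W × M))
    (he0 : Matching.IsElimOf μ1 μ0 ρ0) (he1 : Matching.IsElimOf μ2 μ1 ρ1)
    (hnp : ¬ mkt.Pred ρ0 ρ1) :
    mkt.ExposedRotation μ0 ρ1 ∧
    ∀ μ1' : Matching M W, Matching.IsElimOf μ1' μ0 ρ1 →
      mkt.ExposedRotation μ1' ρ0 ∧ Matching.IsElimOf μ2 μ1' ρ0 := by
  classical
  set AM : M → Prop := fun m => m ∈ ρ0.map Prod.snd with hAM
  set AW : W → Prop := fun w => w ∈ ρ0.map Prod.fst with hAW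
  set BM : M → Prop := fun m => m ∈ ρ1.map Prod.snd with hBM
  set BW : W → Prop := fun w => w ∈ ρ1.map Prod.fst with hBW
  have link : ∀ {μ' μ : Matching M W} {ρ : List (W × M)}, Matching.IsElimOf μ' μ ρ →
      (∀ m w, μ.mu m = some w → (m ∈ ρ.map Prod.snd ↔ w ∈ ρ.map Prod.fst)) ∧
      (∀ m w, μ'.mu m = some w → (m ∈ ρ.map Prod.snd ↔ w ∈ ρ.map Prod.fst)) := by
    intro μ' μ ρ h
    constructor
    · intro m w e
      constructor
      · intro hm
        obtain ⟨_, _, _, _, h1, _, h2, _⟩ := elim_man h hm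
        rw [e] at h2; cases h2; exact h1
      · intro hw
        obtain ⟨_, _, _, _, h1, _, h2, _⟩ := elim_woman h hw
        rw [(μ.consistent m w).1 e] at h2; cases h2; exact h1
    · intro m w e
      constructor
      · intro hm
        obtain ⟨_, _, _, _, _, h1, _, h2⟩ := elim_man h hm
        rw [e] at h2; cases h2; exact h1
      · intro hw
        obtain ⟨_, _, _, _, _, h1, _, h2⟩ := elim_woman h hw
        rw [(μ'.consistent m w).1 e] at h2; cases h2; exact h1
  have A0 : ∀ m w, μ0.mu m = some w → (AM m ↔ AW w) := (link he0).1
  have A1 : ∀ m w, μ1.mu m = some w → (AM m ↔ AW w) := (link he0).2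
  have B1 : ∀ m w, μ1.mu m = some w → (BM m ↔ BW w) := (link he1).1
  have B2 : ∀ m w, μ2.mu m = some w → (BM m ↔ BW w) := (link he1).2
  have eA : ∀ m, ¬ AM m → μ1.mu m = μ0.mu m := he0.2.2.2.2.2.1
  have eA' : ∀ w, ¬ AW w → μ1.nu w = μ0.nu w := he0.2.2.2.2.2.2
  have eB : ∀ m, ¬ BM m → μ2.mu m = μ1.mu m := he1.2.2.2.2.2.1
  have eB' : ∀ w, ¬ BW w → μ2.nu w = μ1.nu w := he1.2.2.2.2.2.2
  have dM : ∀ m, BM m → ¬ AM m := by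
    intro m hb ha
    obtain ⟨w, _, _, hmem, _, _, h1, _⟩ := elim_man he1 hb
    obtain ⟨w0, w1, hmv, _, _, _, _, h2⟩ := elim_man he0 ha
    rw [h1] at h2; cases h2
    exact hnp (Or.inl ⟨w, m, ⟨w0, hmv⟩, hmem⟩)
  have dW : ∀ w, BW w → ¬ AW w := by
    intro w hb ha
    obtain ⟨m, _, _, _, hm, _, h1, _⟩ := elim_woman he1 hb
    exact dM m hm ((A1 m w ((μ1.consistent m w).2 h1)).2 ha)
  have B0 : ∀ m w, μ0.mu m = some w → (BM m ↔ BW w) := by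
    intro m w e
    by_cases ha : AM m
    · have := (A0 m w e).1 ha
      exact ⟨fun h => absurd ha (dM m h), fun h => absurd this (dW w h)⟩
    · exact B1 m w (eA m ha ▸ e)
  have d10 : mkt.Dom μ1 μ0 := hc1.1.1
  have d21 : mkt.Dom μ2 μ1 := hc2.1.1
  have e10 : ∀ m, BM m → μ1.mu m = μ0.mu m := fun m h => eA m (dM m h)
  have e10' : ∀ w, BW w → μ1.nu w = μ0.nu w := fun w h => eA' w (dW w h)
  have e21 : ∀ m, AM m → μ2.mu m = μ1.mu m := fun m h => eB m (fun h' => dM m h' h)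
  have e21' : ∀ w, AW w → μ2.nu w = μ1.nu w := fun w h => eB' w (fun h' => dW w h' h)
  obtain ⟨ν, n1, n2, n3, n4⟩ := patch_exists BM BW μ2 μ0 B2 B0
  have hνs : mkt.Stable ν := by
    refine patch_stable mkt h2 h0 n1 n2 n3 n4 ?_ ?_
    · intro m w hm hw
      by_cases ha : AW w
      · rintro ⟨_, k2, k3⟩
        rw [n1 m hm] at k2
        rw [n4 w hw] at k3
        obtain ⟨whi, wlo, hmv, _, hwhi, _, q1, q2⟩ := elim_man he1 hm
        obtain ⟨mlo, mhi, hwv, _, hmlo, hmhi, q3, q4⟩ := elim_woman he0 ha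
        have q5 := e10 m hm
        have q6 := e21' w ha
        refine hnp (Or.inr ⟨m, w, mlo, mhi, whi, wlo, hwv, q3 ▸ k3, ?_, hmv, q2 ▸ k2, ?_⟩)
        · by_contra hle
          refine h2.2 m w ⟨?_, k2, ?_⟩
          · intro e; rw [e] at k2; omega
          · rw [q6, q4]
            refine lt_of_le_of_ne (not_lt.1 hle) fun e => ?_
            have := mkt.wRank_inj w e
            cases this
            exact dM _ hm hmhi
        · by_contra hle
          have hne : whi ≠ w := by rintro rfl; exact hw hwhi
          refine h0.2 m w ⟨?_, ?_, k3⟩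
          · rw [← q5, q1]; simpa using hne
          · rw [← q5, q1]
            refine lt_of_le_of_ne (not_lt.1 hle) fun e => ?_
            exact hne (Option.some.inj (mkt.mRank_inj m e))
      · refine not_blocking_of mkt h2 (by rw [n1 m hm]) ?_
        rw [n4 w hw, eB' w hw, eA' w ha]
    · intro m w hm hw
      refine not_blocking_of mkt h0 (by rw [n2 m hm]) ?_
      rw [n3 w hw]
      exact (d10 w).trans (d21 w)
  have dν0 : mkt.Dom ν μ0 := by
    intro w
    by_cases hw : BW w
    · rw [n3 w hw]; exact (d10 w).trans (d21 w)
    · rw [n4 w hw]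
  have d2ν : mkt.Dom μ2 ν := by
    intro w
    by_cases hw : BW w
    · rw [n3 w hw]
    · rw [n4 w hw]; exact (d10 w).trans (d21 w)
  have hνe : Matching.IsElimOf ν μ0 ρ1 := by
    obtain ⟨p1, p2, p3, p4, p5, p6, p7⟩ := he1
    refine ⟨p1, p2, p3, ?_, ?_, n2, n4⟩
    · intro i
      rw [← e10' _ (List.mem_map_of_mem (List.get_mem _ _))]; exact p4 i
    · intro i
      rw [n1 _ (List.mem_map_of_mem (List.get_mem _ _))]; exact p5 i
  have hνe2 : Matching.IsElimOf μ2 ν ρ0 := by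
    obtain ⟨p1, p2, p3, p4, p5, p6, p7⟩ := he0
    refine ⟨p1, p2, p3, ?_, ?_, ?_, ?_⟩
    · intro i
      rw [n4 _ (fun h => dW _ h (List.mem_map_of_mem (List.get_mem _ _)))]; exact p4 i
    · intro i
      rw [e21 _ (List.mem_map_of_mem (List.get_mem _ _))]; exact p5 i
    · intro m hm
      by_cases hb : BM m
      · exact (n1 m hb).symm
      · rw [n2 m hb, eB m hb, eA m hm]
    · intro w hw
      by_cases hb : BW w
      · exact (n3 w hb).symm
      · rw [n4 w hb, eB' w hb, eA' w hw]
  have hν0 : ν ≠ μ0 := by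
    rintro rfl
    apply hc2.1.2
    apply matching_ext
    intro w
    by_cases hw : BW w
    · rw [← n3 w hw, e10' w hw]
    · exact eB' w hw
  have h2ν : μ2 ≠ ν := by
    intro e
    apply hc1.1.2
    apply matching_ext
    intro w
    by_cases hw : AW w
    · rw [← e21' w hw, e, n4 w (fun h => dW w h hw)]
    · exact eA' w hw
  have c1 : mkt.Covers ν μ0 := by
    refine ⟨⟨dν0, hν0⟩, ?_⟩
    rintro ⟨σ, hσ, ⟨ds1, ns1⟩, ⟨ds2, ns2⟩⟩
    have s1 : ∀ w, ¬ BW w → σ.nu w = μ0.nu w := by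
      intro w hw
      have a1 := ds1 w
      have a2 := ds2 w
      rw [n4 w hw] at a1
      exact mkt.wRank_inj w (le_antisymm a1 a2)
    have s2 : ∀ m, ¬ BM m → σ.mu m = μ0.mu m := by
      intro m hm
      have a1 := men_reverse mkt hσ hνs ds1 m
      have a2 := men_reverse mkt h0 hσ ds2 m
      rw [n2 m hm] at a1
      exact mkt.mRank_inj m (le_antisymm a2 a1)
    have Aσ : ∀ m w, σ.mu m = some w → (AM m ↔ AW w) := by
      intro m w e
      constructor
      · intro h
        rw [s2 m (fun h' => dM m h' h)] at e
        exact (A0 m w e).1 h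
      · intro h
        have e' := (σ.consistent m w).1 e
        rw [s1 w (fun h' => dW w h' h)] at e'
        exact (A0 m w ((μ0.consistent m w).2 e')).2 h
    obtain ⟨τ, t1, t2, t3, t4⟩ := patch_exists AM AW μ1 σ A1 Aσ
    refine hc2.2 ⟨τ, ?_, ⟨?_, ?_⟩, ⟨?_, ?_⟩⟩
    · refine patch_stable mkt h1 hσ t1 t2 t3 t4 ?_ ?_
      · intro m w hm hw
        refine not_blocking_of mkt h1 (by rw [t1 m hm]) ?_
        rw [t4 w hw, eA' w hw]; exact ds2 w
      · intro m w hm hw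
        refine not_blocking_of mkt hσ (by rw [t2 m hm]) ?_
        rw [t3 w hw, s1 w (fun h' => dW w h' hw)]; exact d10 w
    · intro w
      by_cases hw : AW w
      · rw [t3 w hw]; exact d21 w
      · rw [t4 w hw]; exact (ds1 w).trans (d2ν w)
    · intro e
      apply ns1
      apply matching_ext
      intro w
      by_cases hb : BW w
      · rw [n3 w hb, e, t4 w (dW w hb)]
      · rw [n4 w hb, s1 w hb]
    · intro w
      by_cases hw : AW w
      · rw [t3 w hw]
      · rw [t4 w hw, eA' w hw]; exact ds2 w
    · intro e
      apply ns2
      apply matching_ext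
      intro w
      by_cases hb : BW w
      · rw [← t4 w (dW w hb), e, e10' w hb]
      · exact s1 w hb
  have c2 : mkt.Covers μ2 ν := by
    refine ⟨⟨d2ν, h2ν⟩, ?_⟩
    rintro ⟨σ, hσ, ⟨ds1, ns1⟩, ⟨ds2, ns2⟩⟩
    have s1 : ∀ w, ¬ AW w → σ.nu w = μ2.nu w := by
      intro w hw
      have a1 := ds1 w
      have a2 := ds2 w
      rw [← hνe2.2.2.2.2.2.2 w hw] at a2
      exact mkt.wRank_inj w (le_antisymm a1 a2)
    have s2 : ∀ m, ¬ AM m → σ.mu m = μ2.mu m := by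
      intro m hm
      have a1 := men_reverse mkt hσ h2 ds1 m
      have a2 := men_reverse mkt hνs hσ ds2 m
      rw [← hνe2.2.2.2.2.2.1 m hm] at a2
      exact mkt.mRank_inj m (le_antisymm a2 a1)
    have Bσ : ∀ m w, σ.mu m = some w → (BM m ↔ BW w) := by
      intro m w e
      constructor
      · intro h
        rw [s2 m (dM m h)] at e
        exact (B2 m w e).1 h
      · intro h
        have e' := (σ.consistent m w).1 e
        rw [s1 w (dW w h)] at e'
        exact (B2 m w ((μ2.consistent m w).2 e')).2 h
    obtain ⟨τ, t1, t2, t3, t4⟩ := patch_exists BM BW μ0 σ B0 Bσ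
    refine hc1.2 ⟨τ, ?_, ⟨?_, ?_⟩, ⟨?_, ?_⟩⟩
    · refine patch_stable mkt h0 hσ t1 t2 t3 t4 ?_ ?_
      · intro m w hm hw
        refine not_blocking_of mkt h0 (by rw [t1 m hm]) ?_
        rw [t4 w hw, ← n4 w hw]; exact ds2 w
      · intro m w hm hw
        refine not_blocking_of mkt h1 ?_ ?_
        · rw [t2 m hm, ← eB m hm]; exact men_reverse mkt hσ h2 ds1 m
        · rw [t3 w hw, e10' w hw]
    · intro w
      by_cases hw : BW w
      · rw [t3 w hw]; exact d10 w
      · rw [t4 w hw, ← eB' w hw]; exact ds1 w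
    · intro e
      apply ns1
      apply matching_ext
      intro w
      by_cases hb : BW w
      · exact (s1 w (dW w hb)).symm
      · rw [eB' w hb, e, t4 w hb]
    · intro w
      by_cases hw : BW w
      · rw [t3 w hw]
      · rw [t4 w hw, ← n4 w hw]; exact ds2 w
    · intro e
      apply ns2
      apply matching_ext
      intro w
      by_cases hb : BW w
      · rw [s1 w (dW w hb), n3 w hb]
      · rw [← t4 w hb, e, n4 w hb]
  refine ⟨⟨ν, hνe, hνs, c1⟩, ?_⟩
  intro ν' hν'
  have : ν' = ν := by
    apply matching_ext'
    intro m
    by_cases hm : BM m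
    · obtain ⟨p, hp, rfl⟩ := List.mem_map.1 hm
      obtain ⟨i, rfl⟩ := List.get_of_mem hp
      exact (hν'.2.2.2.2.1 i).trans (hνe.2.2.2.2.1 i).symm
    · exact (hν'.2.2.2.2.2.1 m hm).trans (n2 m hm).symm
  subst this
  exact ⟨⟨μ2, hνe2, h2, c2⟩, hνe2⟩
end
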